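/- arXiv:1510.08723 — 6 statements merged into one kernel-verified Lean document; each statement's English description precedes it below -/
import Mathlib

section
/- Let L : ℂ × ℂ → ℂ be Hermitian-entire and a positive semidefinite kernel (so in particular L(z,z) ≥ 0 for all z). Define u : ℂ → [−∞, ∞) by u(z) = log(L(z,z)) when L(z,z) > 0 and u(z) = −∞ when L(z,z) = 0. Then u is subharmonic on ℂ; in particular, for every z₀ ∈ ℂ and every r > 0, u(z₀) ≤ (1/2π)·∫₀^{2π} u(z₀ + r e^{iθ}) dθ. -/
/-!
Fix `z₀` with `L z₀ z₀ > 0` (otherwise `u z₀ = -∞`) and consider the entire function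
`f z = L z z₀`. In the reproducing kernel Hilbert space of `L`, `f z` is the inner product of the
kernel vectors at `z₀` and `z`, so Cauchy–Schwarz gives `‖f z‖² ≤ L z z * L z₀ z₀`; for this only
the positivity of `2 × 2` quadratic forms is needed (`PSDKernel.norm_sq_le`). Hence
`2 log ‖f‖ - log L z₀ z₀` is a minorant of `u`, with equality at `z₀`, and Jensen's formula gives
the sub-mean value inequality for `log ‖f‖` at `z₀`, where `f z₀ ≠ 0`
(`log_norm_le_circleAverage`).

The zeros of `f` meet the circle in a null set, so the minorant and the continuity of the diagonal
show that `θ ↦ log L z z` is integrable along the circle, and the extended integral is then an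
ordinary one (`erealIntegral_eq_integral`). Upper semicontinuity holds because `u` is the
composition of the continuous maps `z ↦ L z z` and `ENNReal.log`.
-/

open Complex MeasureTheory

/-- `L` is Hermitian: `L(z,w) = conj (L(w,z))`, and `(z,w) ↦ L(z, conj w)` is
entire (jointly analytic) on `ℂ²`. -/
def HermitianEntire (L : ℂ → ℂ → ℂ) : Prop :=
  (∀ z w : ℂ, L z w = (starRingEnd ℂ) (L w z)) ∧
    AnalyticOnNhd ℂ (fun p : ℂ × ℂ => L p.1 ((starRingEnd ℂ) p.2)) Set.univ

/-- `L` is a positive semidefinite kernel: every finite quadratic form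
`Σ_{j,k} α_j conj(α_k) L(z_j, z_k)` is a nonnegative real number. -/
def PSDKernel (L : ℂ → ℂ → ℂ) : Prop :=
  ∀ (n : ℕ) (z α : Fin n → ℂ), ∃ r : ℝ, 0 ≤ r ∧
    (∑ j, ∑ k, α j * (starRingEnd ℂ) (α k) * L (z j) (z k)) = (r : ℂ)

/-- The positive part of an extended real number, as a value in `ℝ≥0∞`
(`⊥ ↦ 0`, `⊤ ↦ ⊤`, and a real `x ↦ max x 0`). -/
noncomputable def erealPos (x : EReal) : ENNReal :=
  if x = ⊤ then ⊤ else ENNReal.ofReal x.toReal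

/-- The (signed) integral of an `EReal`-valued function with respect to a
measure `μ` on `ℝ`, defined as the difference of the lower integrals of the
positive and negative parts. -/
noncomputable def erealIntegral (μ : Measure ℝ) (f : ℝ → EReal) : EReal :=
  ((∫⁻ t, erealPos (f t) ∂μ : ENNReal) : EReal) -
    ((∫⁻ t, erealPos (-(f t)) ∂μ : ENNReal) : EReal)

theorem PSDKernel.diag_eq {L : ℂ → ℂ → ℂ} (hpsd : PSDKernel L) (z : ℂ) :
    0 ≤ (L z z).re ∧ L z z = ((L z z).re : ℂ) := by
  obtain ⟨r, hr, h⟩ := hpsd 1 (fun _ => z) (fun _ => 1)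
  simp at h
  rw [h]
  simpa using hr

/-- Cauchy–Schwarz for the kernel, from the quadratic form at the points `z, w` with coefficients
`L w w` and `-L z w`. -/
theorem PSDKernel.norm_sq_le {L : ℂ → ℂ → ℂ} (hherm : HermitianEntire L) (hpsd : PSDKernel L)
    (z w : ℂ) (hw : 0 < (L w w).re) : ‖L z w‖ ^ 2 ≤ (L z z).re * (L w w).re := by
  obtain ⟨r, hr, h⟩ := hpsd 2 ![z, w] ![L w w, -L z w]
  simp only [Fin.sum_univ_two, Matrix.cons_val_zero, Matrix.cons_val_one, map_neg] at h
  have hwz := hherm.1 w z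
  have hz' := (hpsd.diag_eq z).2
  have hw' := (hpsd.diag_eq w).2
  set a := (L z z).re
  set b := (L w w).re
  rw [hwz, hz', hw', conj_ofReal] at h
  have hc : L z w * (starRingEnd ℂ) (L z w) = ((‖L z w‖ ^ 2 : ℝ) : ℂ) := by
    rw [mul_conj, normSq_eq_norm_sq]
  have h2 : ((b * (a * b - ‖L z w‖ ^ 2) : ℝ) : ℂ) = (r : ℂ) := by
    rw [← h]
    push_cast at hc ⊢
    linear_combination (b : ℂ) * hc
  have h3 : b * (a * b - ‖L z w‖ ^ 2) = r := by exact_mod_cast h2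
  have := nonneg_of_mul_nonneg_right (h3 ▸ hr) hw
  linarith

theorem HermitianEntire.continuous_diag {L : ℂ → ℂ → ℂ} (hherm : HermitianEntire L) :
    Continuous fun z => L z z := by
  have h := (continuousOn_univ.mp hherm.2.continuousOn).comp
    (continuous_id.prodMk continuous_conj)
  simpa [Function.comp_def] using h

theorem HermitianEntire.analytic_left {L : ℂ → ℂ → ℂ} (hherm : HermitianEntire L) (w : ℂ) :
    AnalyticOnNhd ℂ (fun z => L z w) Set.univ := by
  intro z _
  have h := (hherm.2 (z, (starRingEnd ℂ) w) trivial).comp_of_eq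
    (g := fun p : ℂ × ℂ => L p.1 ((starRingEnd ℂ) p.2))
    (f := fun z : ℂ => (z, (starRingEnd ℂ) w)) (by fun_prop) rfl
  simpa [Function.comp_def] using h

/-- The sub-mean value inequality for `log ‖f‖`: in Jensen's formula each zero of `f` in the disc
contributes a nonnegative term. -/
theorem log_norm_le_circleAverage {f : ℂ → ℂ} (hf : AnalyticOnNhd ℂ f Set.univ) {c : ℂ} {R : ℝ}
    (hR : 0 < R) (hc : f c ≠ 0) :
    Real.log ‖f c‖ ≤ Real.circleAverage (fun z => Real.log ‖f z‖) c R := by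
  have hf' : AnalyticOnNhd ℂ f (Metric.closedBall c |R|) := hf.mono (Set.subset_univ _)
  rw [hf'.circleAverage_log_norm hR.ne' hc]
  refine le_add_of_nonneg_left (finsum_nonneg fun z => ?_)
  by_cases hz : z ∈ Metric.closedBall c |R|
  · refine mul_nonneg (by exact_mod_cast MeromorphicOn.AnalyticOnNhd.divisor_nonneg hf' z) ?_
    rcases eq_or_ne c z with rfl | hne
    · simp
    · refine Real.log_nonneg ?_
      have hpos : 0 < ‖c - z‖ := norm_pos_iff.mpr (sub_ne_zero.mpr hne)
      rw [← div_eq_mul_inv, one_le_div hpos]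
      rwa [Metric.mem_closedBall', dist_eq_norm, abs_of_pos hR] at hz
  · rw [Function.locallyFinsuppWithin.apply_eq_zero_of_notMem _ hz]
    simp

/-- A nonzero entire function vanishes only on a null set of angles of a circle. -/
theorem ae_circleMap_ne_zero {f : ℂ → ℂ} (hf : AnalyticOnNhd ℂ f Set.univ) {c x : ℂ} {R : ℝ}
    (hR : R ≠ 0) (hx : f x ≠ 0) :
    ∀ᵐ θ ∂(volume.restrict (Set.Ioc (0 : ℝ) (2 * Real.pi))), f (circleMap c R θ) ≠ 0 := by
  have h1 : ∀ᶠ z in Filter.codiscreteWithin (Metric.sphere c |R|), f z ≠ 0 :=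
    Filter.codiscreteWithin_mono (Set.subset_univ _) (hf.preimage_zero_mem_codiscrete hx)
  have h2 : ∀ᶠ θ in Filter.codiscrete ℝ, f (circleMap c R θ) ≠ 0 :=
    circleMap_preimage_codiscrete hR h1
  exact ae_restrict_le_codiscreteWithin measurableSet_Ioc
    (Filter.codiscreteWithin_mono (Set.subset_univ _) h2)

theorem erealIntegral_eq_integral {μ : Measure ℝ} {f : ℝ → EReal} {v : ℝ → ℝ}
    (hv : Integrable v μ) (hfv : ∀ᵐ t ∂μ, f t = (v t : EReal)) :
    erealIntegral μ f = ((∫ t, v t ∂μ : ℝ) : EReal) := by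
  have h1 : ∫⁻ t, erealPos (f t) ∂μ = ∫⁻ t, ENNReal.ofReal (v t) ∂μ :=
    lintegral_congr_ae (hfv.mono fun t ht => by simp [ht, erealPos])
  have h2 : ∫⁻ t, erealPos (-(f t)) ∂μ = ∫⁻ t, ENNReal.ofReal (-v t) ∂μ :=
    lintegral_congr_ae (hfv.mono fun t ht => by
      simp only [ht, ← EReal.coe_neg, erealPos, EReal.coe_ne_top, if_false, EReal.toReal_coe])
  have hp : ∫⁻ t, ENNReal.ofReal (v t) ∂μ ≠ ⊤ := hv.lintegral_lt_top.ne
  have hn : ∫⁻ t, ENNReal.ofReal (-v t) ∂μ ≠ ⊤ := hv.neg.lintegral_lt_top.ne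
  rw [erealIntegral, h1, h2, integral_eq_lintegral_pos_part_sub_lintegral_neg_part hv,
    EReal.coe_sub, EReal.coe_ennreal_toReal hp, EReal.coe_ennreal_toReal hn]

/-- Lemma 4.2: if `L : ℂ × ℂ → ℂ` is Hermitian-entire and a positive
semidefinite kernel, then `u(z) = log L(z,z)` (with `u(z) = −∞` when
`L(z,z) = 0`) is subharmonic on `ℂ`: it is upper semicontinuous and satisfies
the sub-mean value inequality
`u(z₀) ≤ (1/2π)·∫₀^{2π} u(z₀ + r e^{iθ}) dθ` for all `z₀ ∈ ℂ` and `r > 0`. -/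
theorem log_diagonal_subharmonic (L : ℂ → ℂ → ℂ)
    (hherm : HermitianEntire L) (hpsd : PSDKernel L)
    (u : ℂ → EReal)
    (hu : ∀ z : ℂ, u z = if L z z = 0 then (⊥ : EReal)
      else ((Real.log (L z z).re : ℝ) : EReal)) :
    UpperSemicontinuous u ∧
      ∀ (z₀ : ℂ) (r : ℝ), 0 < r →
        u z₀ ≤ ((1 / (2 * Real.pi) : ℝ) : EReal) *
          erealIntegral (volume.restrict (Set.Ioc (0:ℝ) (2 * Real.pi)))
            (fun θ => u (z₀ + (r : ℂ) * Complex.exp (θ * Complex.I))) := by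
  have hcont := hherm.continuous_diag
  have hlog : u = fun z => ENNReal.log (ENNReal.ofReal (L z z).re) := by
    funext z
    obtain ⟨h0, he⟩ := hpsd.diag_eq z
    rw [hu, ENNReal.log_ofReal]
    refine if_congr ⟨fun h => by simp [h], fun h => ?_⟩ rfl rfl
    rw [he, le_antisymm h h0, ofReal_zero]
  refine ⟨?_, fun z₀ r hr => ?_⟩
  · rw [hlog]
    exact (ENNReal.continuous_log.comp (ENNReal.continuous_ofReal.comp
      (continuous_re.comp hcont))).upperSemicontinuous
  by_cases h0 : L z₀ z₀ = 0
  · simp [hu, h0]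
  obtain ⟨hb0, hbe⟩ := hpsd.diag_eq z₀
  have hb : 0 < (L z₀ z₀).re := lt_of_le_of_ne hb0 fun h => h0 (by rw [hbe, ← h, ofReal_zero])
  set b := (L z₀ z₀).re with hbdef
  have hf := hherm.analytic_left z₀
  have hne := ae_circleMap_ne_zero hf (c := z₀) (R := r) hr.ne' h0
  set μ : Measure ℝ := volume.restrict (Set.Ioc (0 : ℝ) (2 * Real.pi)) with hμ
  have hpos : ∀ z, L z z₀ ≠ 0 → 0 < (L z z).re := fun z hz => by
    have h1 := hpsd.norm_sq_le hherm z z₀ hb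
    have h2 : 0 < ‖L z z₀‖ ^ 2 := by positivity
    exact pos_of_mul_pos_left (h2.trans_le h1) hb.le
  have hlower : ∀ z, L z z₀ ≠ 0 →
      2 * Real.log ‖L z z₀‖ - Real.log b ≤ Real.log (L z z).re := fun z hz => by
    have h1 := Real.log_le_log (by positivity) (hpsd.norm_sq_le hherm z z₀ hb)
    rw [Real.log_pow, Real.log_mul (hpos z hz).ne' hb.ne'] at h1
    push_cast at h1
    linarith
  -- On the compact circle `L z z` is bounded, and `log x ≤ x` for `x ≥ 0`.
  obtain ⟨M, hM⟩ : ∃ M, ∀ θ : ℝ, Real.log (L (circleMap z₀ r θ) (circleMap z₀ r θ)).re ≤ M := by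
    obtain ⟨C, hC⟩ := (isCompact_sphere z₀ r).exists_bound_of_continuousOn hcont.continuousOn
    refine ⟨C, fun θ => ?_⟩
    refine (Real.log_le_self (hpsd.diag_eq _).1).trans ?_
    exact (re_le_norm _).trans (hC _ (circleMap_mem_sphere _ hr.le _))
  have hI : Integrable (fun θ => Real.log ‖L (circleMap z₀ r θ) z₀‖) μ :=
    (intervalIntegrable_iff_integrableOn_Ioc_of_le Real.two_pi_pos.le).mp
      (MeromorphicOn.circleIntegrable_log_norm (f := fun z => L z z₀)
        (hf.mono (Set.subset_univ _)).meromorphicOn)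
  have hg : Integrable (fun θ => 2 * Real.log ‖L (circleMap z₀ r θ) z₀‖ - Real.log b) μ :=
    (hI.const_mul 2).sub (integrable_const _)
  -- Where `L z z = 0` this integrand takes the junk value `Real.log 0 = 0` instead of `-∞`, but
  -- that happens only on the null set of zeros of `z ↦ L z z₀`.
  have hv : Integrable
      (fun θ => Real.log (L (circleMap z₀ r θ) (circleMap z₀ r θ)).re) μ := by
    refine integrable_of_le_of_le (g₂ := fun _ => M) ?_
      (hne.mono fun θ hθ => hlower _ hθ) (.of_forall hM) hg (integrable_const _)
    exact (Real.measurable_log.comp (continuous_re.comp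
      (hcont.comp (continuous_circleMap z₀ r))).measurable).aestronglyMeasurable
  have hae : ∀ᵐ θ : ℝ ∂μ, u (z₀ + (r : ℂ) * Complex.exp (θ * Complex.I)) =
      ((Real.log (L (circleMap z₀ r θ) (circleMap z₀ r θ)).re : ℝ) : EReal) :=
    hne.mono fun θ hθ => by
      change u (circleMap z₀ r θ) = _
      rw [hu, if_neg]
      intro h
      simpa [h] using hpos _ hθ
  rw [erealIntegral_eq_integral hv hae, hu, if_neg h0, ← EReal.coe_mul, EReal.coe_le_coe_iff]
  have hJ := log_norm_le_circleAverage hf hr h0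
  have hnorm : ‖L z₀ z₀‖ = b := by rw [hbe, norm_real, Real.norm_of_nonneg hb0]
  rw [Real.circleAverage_def, hnorm, intervalIntegral.integral_of_le Real.two_pi_pos.le,
    smul_eq_mul] at hJ
  have hmono := integral_mono_ae hg hv (hne.mono fun θ hθ => hlower _ hθ)
  have hvol : μ.real Set.univ = 2 * Real.pi := by
    simp [hμ, measureReal_def, Real.pi_pos.le]
  rw [integral_sub (hI.const_mul 2) (integrable_const _), integral_const_mul, integral_const,
    hvol, smul_eq_mul] at hmono
  have hscale := mul_le_mul_of_nonneg_left hmono (inv_pos.mpr Real.two_pi_pos).le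
  rw [mul_sub, inv_mul_cancel_left₀ Real.two_pi_pos.ne', mul_left_comm] at hscale
  rw [one_div, ← hbdef]
  linarith
end

section
/- Let M be a real-valued function of class C⁶ on a neighborhood of 0 in ℝ² (with coordinates λ = σ + iτ), with M(σ,0) = 0 and ∂_τ M(σ,0) = 0 for all σ in a neighborhood of 0 in ℝ. Write Δ = (1/4)(∂_σ² + ∂_τ²), and assume there is a constant c such that ΔM(λ) = c·|λ|² + O(|λ|³) as λ → 0. Then M(σ+iτ) = 2c·σ²τ² + O(|λ|⁵) as λ = σ+iτ → 0; that is, there exist δ > 0 and C > 0 such that |M(σ,τ) − 2c·σ²τ²| ≤ C·(σ² + τ²)^{5/2} whenever σ² + τ² ≤ δ². -/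
/-!
Put `N = M - 2cσ²τ²`. Then `ΔN = o(|λ|²)` while `N` and `∂_τ N` vanish on the real axis, and it
suffices to show that every partial derivative of `N` of order at most `4` vanishes at `0`: the
bound `N = O(|λ|⁵)` then follows by integrating five times (`pd_isBigO`).

Write `a i j = ∂_σ^i ∂_τ^j N (0)`. The Cauchy data give `a i 0 = a i 1 = 0` (`pd_axis`). Since `ΔN`
is of class `C⁴` and `o(|λ|²)`, its derivatives of order at most `2` vanish at `0`
(`dir_jet_zero`, applied to three directions), that is, `a (i + 2) j + a i (j + 2) = 0` for
`i + j ≤ 2`. This recursion determines all remaining `a i j` with `i + j ≤ 4` and makes them zero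
(`core_isBigO`).
-/

open Real Filter Topology

/-- One quarter of the usual Laplacian of `M : ℝ → ℝ → ℝ` (coordinates
`λ = σ + iτ`): `ΔM = (1/4)(∂_σ² M + ∂_τ² M)`. -/
noncomputable def quarterLap (M : ℝ → ℝ → ℝ) (σ τ : ℝ) : ℝ :=
  (1 / 4) * (iteratedDeriv 2 (fun s => M s τ) σ + iteratedDeriv 2 (fun t => M σ t) τ)

/-! ### Directional derivatives -/

/-- The derivative of `F` in the constant direction `v`, as a function on the plane. -/
noncomputable def dirD (v : ℝ × ℝ) (F : ℝ × ℝ → ℝ) : ℝ × ℝ → ℝ := fun p => fderiv ℝ F p v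

/-- The mixed partial derivative `∂_σ^i ∂_τ^j F` (the `τ`-derivatives are taken first). -/
noncomputable def pd (i j : ℕ) (F : ℝ × ℝ → ℝ) : ℝ × ℝ → ℝ :=
  (dirD (1, 0))^[i] ((dirD (0, 1))^[j] F)

lemma dirD_contDiffAt {F : ℝ × ℝ → ℝ} {p : ℝ × ℝ} {n : ℕ} (v : ℝ × ℝ)
    (h : ContDiffAt ℝ (n + 1 : ℕ) F p) : ContDiffAt ℝ n (dirD v F) p :=
  (h.fderiv_right (m := n) (by push_cast; exact le_rfl)).clm_apply contDiffAt_const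

lemma dirD_congr {F G : ℝ × ℝ → ℝ} (v : ℝ × ℝ) (h : F =ᶠ[𝓝 0] G) :
    dirD v F =ᶠ[𝓝 0] dirD v G :=
  (h.fderiv (𝕜 := ℝ)).mono fun p hp => by simp [dirD, hp]

lemma eventually_differentiableAt {F : ℝ × ℝ → ℝ} {n : ℕ} (hn : 1 ≤ n)
    (h : ContDiffAt ℝ n F 0) : ∀ᶠ p in 𝓝 (0 : ℝ × ℝ), DifferentiableAt ℝ F p := by
  refine (h.eventually (by simp)).mono fun p hp => hp.differentiableAt ?_
  exact_mod_cast (by omega : n ≠ 0)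

lemma dirD_add {F G : ℝ × ℝ → ℝ} (v : ℝ × ℝ) {m n : ℕ} (hm : 1 ≤ m) (hn : 1 ≤ n)
    (hF : ContDiffAt ℝ m F 0) (hG : ContDiffAt ℝ n G 0) :
    dirD v (F + G) =ᶠ[𝓝 0] dirD v F + dirD v G := by
  filter_upwards [eventually_differentiableAt hm hF, eventually_differentiableAt hn hG] with p h1 h2
  simp [dirD, fderiv_add h1 h2]

/-- Symmetry of second derivatives, in the form needed to reorder partial derivatives. -/
lemma dirD_comm {F : ℝ × ℝ → ℝ} (v w : ℝ × ℝ) (h : ContDiffAt ℝ (2 : ℕ) F 0) :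
    dirD v (dirD w F) =ᶠ[𝓝 0] dirD w (dirD v F) := by
  filter_upwards [h.eventually (by simp)] with p hp
  have hd : DifferentiableAt ℝ (fderiv ℝ F) p :=
    (hp.fderiv_right (m := 1) (by norm_num)).differentiableAt (by norm_num)
  have key : ∀ a b : ℝ × ℝ, dirD a (dirD b F) p = fderiv ℝ (fderiv ℝ F) p a b := by
    intro a b
    unfold dirD
    rw [fderiv_clm_apply hd (by fun_prop)]
    simp
  rw [key, key]
  exact (hp.isSymmSndFDerivAt (by simp)).eq v w

lemma dirD_hasDerivAt {F : ℝ × ℝ → ℝ} (v p : ℝ × ℝ) (t : ℝ)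
    (h : DifferentiableAt ℝ F (p + t • v)) :
    HasDerivAt (fun s : ℝ => F (p + s • v)) (dirD v F (p + t • v)) t := by
  have h1 : HasDerivAt (fun s : ℝ => p + s • v) v t := by
    simpa using ((hasDerivAt_id t).smul_const v).const_add p
  exact h.hasFDerivAt.comp_hasDerivAt t h1

/-! ### Jets and orders of vanishing -/

/-- Quantitative mean value inequality at the origin: a bound of order `k` on the derivative
integrates to a bound of order `k + 1` with the same constant. -/
lemma bound_of_fderiv_bound {E : Type*} [NormedAddCommGroup E] [NormedSpace ℝ E] {F : E → ℝ}
    {C : ℝ} {k : ℕ} (hC : 0 ≤ C) (hd : ∀ᶠ p in 𝓝 (0 : E), DifferentiableAt ℝ F p) (h0 : F 0 = 0)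
    (hb : ∀ᶠ p in 𝓝 (0 : E), ‖fderiv ℝ F p‖ ≤ C * ‖p‖ ^ k) :
    ∀ᶠ p in 𝓝 (0 : E), ‖F p‖ ≤ C * ‖p‖ ^ (k + 1) := by
  obtain ⟨r, hr, h⟩ := Metric.eventually_nhds_iff.1 (hd.and hb)
  refine Metric.eventually_nhds_iff.2 ⟨r, hr, fun p hp => ?_⟩
  have hsub : ∀ x ∈ Metric.closedBall (0 : E) ‖p‖, dist x 0 < r := fun x hx =>
    lt_of_le_of_lt hx (by simpa using hp)
  have := (convex_closedBall (0 : E) ‖p‖).norm_image_sub_le_of_norm_fderiv_le (𝕜 := ℝ) (f := F)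
    (C := C * ‖p‖ ^ k) (x := 0) (y := p) (fun x hx => (h (hsub x hx)).1)
    (fun x hx => (h (hsub x hx)).2.trans (by
      have : ‖x‖ ≤ ‖p‖ := by simpa using hx
      gcongr)) (by simp) (by simp)
  rw [h0, sub_zero, sub_zero] at this
  rw [pow_succ, ← mul_assoc]; exact this

/-- The converse direction of Taylor's theorem in one variable: `g = o(t²)` forces the value and
the first two derivatives at `0` to vanish. -/
lemma jet_zero_of_isLittleO {g g1 : ℝ → ℝ} {a : ℝ} (hg : ∀ᶠ t in 𝓝 (0 : ℝ), HasDerivAt g (g1 t) t)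
    (hg1 : HasDerivAt g1 a 0) (ho : g =o[𝓝 0] fun t : ℝ => t ^ 2) :
    g 0 = 0 ∧ g1 0 = 0 ∧ a = 0 := by
  have h0 : g 0 = 0 := by
    have := ho.bound (c := 1) one_pos
    simpa using this.self_of_nhds
  have h1 : g1 0 = 0 := by
    refine hg.self_of_nhds.unique ?_
    rw [hasDerivAt_iff_isLittleO]
    simp only [h0, sub_zero, smul_zero]
    exact ho.trans_isBigO (Asymptotics.IsBigO.of_bound 1 (by
      filter_upwards [Metric.ball_mem_nhds (0 : ℝ) one_pos] with t ht
      have : |t| < 1 := by simpa using ht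
      simp only [norm_pow, Real.norm_eq_abs]
      nlinarith [abs_nonneg t]))
  refine ⟨h0, h1, ?_⟩
  -- `g - a t² / 2` has derivative `o(t)`, hence is itself `o(t²)`; so `a t² / 2 = o(t²)`.
  have hH : ∀ᶠ t in 𝓝 (0 : ℝ), HasDerivAt (fun t => g t - a / 2 * t ^ 2) (g1 t - a * t) t := by
    filter_upwards [hg] with t ht
    exact (ht.sub ((hasDerivAt_pow 2 t).const_mul (a / 2))).congr_deriv (by push_cast; ring)
  have ho1 : (fun t => g1 t - a * t) =o[𝓝 0] fun t : ℝ => t := by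
    have := hasDerivAt_iff_isLittleO.1 hg1
    simpa [h1, mul_comm] using this
  have ho2 : (fun t => g t - a / 2 * t ^ 2) =o[𝓝 0] fun t : ℝ => t ^ 2 := by
    refine Asymptotics.IsLittleO.of_bound fun ε hε => ?_
    have := bound_of_fderiv_bound (F := fun t => g t - a / 2 * t ^ 2) (k := 1) hε.le
      (hH.mono fun t ht => ht.differentiableAt) (by simp [h0])
      (by
        filter_upwards [hH, ho1.bound hε] with t ht hb
        rw [← norm_deriv_eq_norm_fderiv, ht.deriv, pow_one]; exact hb)
    simpa using this
  have ho3 : (fun t : ℝ => a / 2 * t ^ 2) =o[𝓝 0] fun t : ℝ => t ^ 2 := by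
    simpa using ho.sub ho2
  by_contra ha
  have h4 := (Asymptotics.isLittleO_const_mul_left_iff (div_ne_zero ha two_ne_zero)).1 ho3
  have h5 := (h4.bound (c := 1 / 2) (by norm_num))
  obtain ⟨r, hr, h6⟩ := Metric.eventually_nhds_iff.1 h5
  have h7 := h6 (y := r / 2) (by simp [abs_of_pos hr]; linarith)
  rw [Real.norm_of_nonneg (by positivity)] at h7
  nlinarith [sq_pos_of_pos hr]

lemma dir_jet_zero {F : ℝ × ℝ → ℝ} (hF : ContDiffAt ℝ (2 : ℕ) F 0)
    (ho : F =o[𝓝 0] fun p : ℝ × ℝ => ‖p‖ ^ 2) (v : ℝ × ℝ) :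
    F 0 = 0 ∧ dirD v F 0 = 0 ∧ dirD v (dirD v F) 0 = 0 := by
  have hc : Tendsto (fun t : ℝ => (0 : ℝ × ℝ) + t • v) (𝓝 0) (𝓝 0) := by
    have : Continuous (fun t : ℝ => (0 : ℝ × ℝ) + t • v) := by fun_prop
    simpa using this.tendsto 0
  have hd := eventually_differentiableAt (by norm_num) hF
  have hd1 := (eventually_differentiableAt le_rfl (dirD_contDiffAt v hF)).self_of_nhds
  have := jet_zero_of_isLittleO (g := fun t => F (0 + t • v)) (g1 := fun t => dirD v F (0 + t • v))
    (a := dirD v (dirD v F) (0 + (0 : ℝ) • v))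
    ((hc.eventually hd).mono fun t ht => dirD_hasDerivAt v 0 t ht)
    (dirD_hasDerivAt v 0 0 (by simpa using hd1))
    ((ho.comp_tendsto hc).trans_isBigO (Asymptotics.IsBigO.of_bound (‖v‖ ^ 2) (by
      refine Eventually.of_forall fun t => ?_
      simp [norm_smul, mul_pow, mul_comm])))
  simpa using this

/-! ### Mixed partial derivatives -/

lemma pd_contDiffAt {F : ℝ × ℝ → ℝ} {i j m n : ℕ} (hF : ContDiffAt ℝ n F 0) (h : i + j + m ≤ n) :
    ContDiffAt ℝ m (pd i j F) 0 := by
  induction i generalizing m with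
  | zero =>
    induction j generalizing m with
    | zero => exact hF.of_le (by exact_mod_cast (by omega : m ≤ n))
    | succ j ih =>
      have := dirD_contDiffAt (0, 1) (ih (m := m + 1) (by omega))
      simpa only [pd, Function.iterate_zero, id, Function.iterate_succ_apply'] using this
  | succ i ih =>
    have := dirD_contDiffAt (1, 0) (ih (m := m + 1) (by omega))
    simpa only [pd, Function.iterate_succ_apply'] using this

lemma pd_succ_left (i j : ℕ) (F : ℝ × ℝ → ℝ) : dirD (1, 0) (pd i j F) = pd (i + 1) j F := by
  simp only [pd, Function.iterate_succ_apply']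

lemma pd_succ_right {F : ℝ × ℝ → ℝ} {i j n : ℕ} (hF : ContDiffAt ℝ n F 0) (h : i + j + 1 ≤ n) :
    dirD (0, 1) (pd i j F) =ᶠ[𝓝 0] pd i (j + 1) F := by
  induction i with
  | zero => simp only [pd, Function.iterate_zero, id, Function.iterate_succ_apply']; rfl
  | succ i ih =>
    rw [← pd_succ_left, ← pd_succ_left]
    exact (dirD_comm _ _ (pd_contDiffAt hF (by omega))).trans (dirD_congr _ (ih (by omega)))

/-- If all partial derivatives of order less than `n` vanish at the origin, then a partial
derivative of order `n - k` is `O(‖p‖ ^ k)`. -/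
lemma pd_isBigO {F : ℝ × ℝ → ℝ} {n : ℕ} (hF : ContDiffAt ℝ n F 0)
    (h0 : ∀ i j, i + j < n → pd i j F 0 = 0) (k i j : ℕ) (h : i + j + k = n) :
    pd i j F =O[𝓝 0] fun p : ℝ × ℝ => ‖p‖ ^ k := by
  induction k generalizing i j with
  | zero =>
    have hc := (pd_contDiffAt (m := 0) hF (by omega : i + j + 0 ≤ n)).continuousAt
    simpa using hc.isBigO_one ℝ
  | succ k ih =>
    have h1 := ih (i + 1) j (by omega)
    have h2 := (pd_succ_right hF (by omega : i + j + 1 ≤ n)).trans_isBigO (ih i (j + 1) (by omega))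
    rw [← pd_succ_left] at h1
    obtain ⟨C₁, hC₁, h1⟩ := h1.exists_nonneg
    obtain ⟨C₂, hC₂, h2⟩ := h2.exists_nonneg
    have hb : ∀ᶠ p in 𝓝 (0 : ℝ × ℝ), ‖fderiv ℝ (pd i j F) p‖ ≤ (C₁ + C₂) * ‖p‖ ^ k := by
      filter_upwards [h1.bound, h2.bound] with p h1 h2
      rw [norm_pow, norm_norm] at h1 h2
      refine ContinuousLinearMap.opNorm_le_bound _ (by positivity) fun v => ?_
      have hv : v = v.1 • ((1 : ℝ), (0 : ℝ)) + v.2 • ((0 : ℝ), (1 : ℝ)) := by ext <;> simp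
      have e : fderiv ℝ (pd i j F) p v
          = v.1 * dirD (1, 0) (pd i j F) p + v.2 * dirD (0, 1) (pd i j F) p := by
        conv_lhs => rw [hv]
        rw [map_add, map_smul, map_smul]; rfl
      rw [e]
      have a1 : ‖v.1‖ ≤ ‖v‖ := norm_fst_le v
      have a2 : ‖v.2‖ ≤ ‖v‖ := norm_snd_le v
      calc _ ≤ ‖v.1‖ * ‖dirD (1, 0) (pd i j F) p‖ + ‖v.2‖ * ‖dirD (0, 1) (pd i j F) p‖ := by
            rw [← norm_mul, ← norm_mul]; exact norm_add_le _ _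
        _ ≤ ‖v‖ * (C₁ * ‖p‖ ^ k) + ‖v‖ * (C₂ * ‖p‖ ^ k) := by gcongr
        _ = _ := by ring
    have := bound_of_fderiv_bound (by positivity)
      (eventually_differentiableAt le_rfl (pd_contDiffAt hF (by omega : i + j + 1 ≤ n)))
      (h0 i j (by omega)) hb
    exact Asymptotics.IsBigO.of_bound (C₁ + C₂) (by simpa using this)

/-- Tangential derivatives of a function vanishing on the real axis vanish there as well. -/
lemma pd_axis {F : ℝ × ℝ → ℝ} {j n : ℕ} (hF : ContDiffAt ℝ n F 0)
    (h0 : ∀ᶠ s in 𝓝 (0 : ℝ), pd 0 j F (s, 0) = 0) (i : ℕ) (h : i + j ≤ n) :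
    ∀ᶠ s in 𝓝 (0 : ℝ), pd i j F (s, 0) = 0 := by
  induction i with
  | zero => exact h0
  | succ i ih =>
    have hd := eventually_differentiableAt le_rfl (pd_contDiffAt hF (by omega : i + j + 1 ≤ n))
    have hc : Tendsto (fun s : ℝ => (s, (0 : ℝ))) (𝓝 0) (𝓝 0) := by
      have : Continuous (fun s : ℝ => (s, (0 : ℝ))) := by fun_prop
      exact this.tendsto 0
    filter_upwards [(ih (by omega)).eventually_nhds, hc.eventually hd] with s hs hds
    have h1 := dirD_hasDerivAt (1, 0) 0 s (F := pd i j F) (by simpa using hds)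
    have h2 : HasDerivAt (fun s : ℝ => pd i j F ((0 : ℝ × ℝ) + s • ((1 : ℝ), (0 : ℝ)))) 0 s := by
      refine (hasDerivAt_const s (0 : ℝ)).congr_of_eventuallyEq (hs.mono fun t ht => ?_)
      simpa using ht
    have := h1.unique h2
    rw [← pd_succ_left]
    simpa using this

/-- The second derivative along a line is the iterated directional derivative. -/
lemma iteratedDeriv_two_line {F : ℝ × ℝ → ℝ} (v p : ℝ × ℝ) (t : ℝ)
    (hF : ContDiffAt ℝ (2 : ℕ) F (p + t • v)) :
    iteratedDeriv 2 (fun s : ℝ => F (p + s • v)) t = dirD v (dirD v F) (p + t • v) := by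
  have hc : Tendsto (fun s : ℝ => p + s • v) (𝓝 t) (𝓝 (p + t • v)) := by
    have : Continuous (fun s : ℝ => p + s • v) := by fun_prop
    exact this.tendsto t
  have hev : deriv (fun s : ℝ => F (p + s • v)) =ᶠ[𝓝 t] fun s => dirD v F (p + s • v) := by
    filter_upwards [hc.eventually (hF.eventually (by simp))] with s hs
    exact (dirD_hasDerivAt v p s (hs.differentiableAt (by norm_num))).deriv
  rw [iteratedDeriv_succ, iteratedDeriv_one, hev.deriv_eq]
  exact (dirD_hasDerivAt v p t ((dirD_contDiffAt v hF).differentiableAt (by norm_num))).deriv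

/-! ### The expansion -/

/-- The analytic core: a function with vanishing Cauchy data on the real axis whose Laplacian is
`o(‖p‖²)` is itself `O(‖p‖⁵)`. -/
lemma core_isBigO {F : ℝ × ℝ → ℝ} (hF : ContDiffAt ℝ (6 : ℕ) F 0)
    (h0 : ∀ᶠ s in 𝓝 (0 : ℝ), pd 0 0 F (s, 0) = 0) (h1 : ∀ᶠ s in 𝓝 (0 : ℝ), pd 0 1 F (s, 0) = 0)
    (hL : (pd 2 0 F + pd 0 2 F) =o[𝓝 0] fun p : ℝ × ℝ => ‖p‖ ^ 2) :
    F =O[𝓝 0] fun p : ℝ × ℝ => ‖p‖ ^ 5 := by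
  set L := pd 2 0 F + pd 0 2 F with hLdef
  have hs : ∀ i j m : ℕ, i + j + m ≤ 6 → ContDiffAt ℝ m (pd i j F) 0 :=
    fun i j m h => pd_contDiffAt hF h
  have hLs : ContDiffAt ℝ (4 : ℕ) L 0 := (hs 2 0 4 le_rfl).add (hs 0 2 4 le_rfl)
  have hLs2 : ContDiffAt ℝ (2 : ℕ) L 0 := hLs.of_le (by norm_num)
  obtain ⟨l0, l1, l11⟩ := dir_jet_zero hLs2 hL (1, 0)
  obtain ⟨-, l2, l22⟩ := dir_jet_zero hLs2 hL (0, 1)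
  obtain ⟨-, -, lm⟩ := dir_jet_zero hLs2 hL ((1, 0) + (0, 1))
  -- Polarization: the mixed derivative is recovered from the direction `(1, 1)`.
  have l12 : dirD (1, 0) (dirD (0, 1) L) 0 = 0 := by
    have e1 : ∀ G : ℝ × ℝ → ℝ, dirD ((1, 0) + (0, 1)) G = dirD (1, 0) G + dirD (0, 1) G := by
      intro G; funext p; simp only [dirD, map_add, Pi.add_apply]
    have c1 := dirD_contDiffAt (n := 1) (1, 0) hLs2
    have c2 := dirD_contDiffAt (n := 1) (0, 1) hLs2
    rw [e1, e1, Pi.add_apply, (dirD_add _ le_rfl le_rfl c1 c2).self_of_nhds,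
      (dirD_add _ le_rfl le_rfl c1 c2).self_of_nhds, Pi.add_apply, Pi.add_apply, l11, l22,
      (dirD_comm (0, 1) (1, 0) hLs2).self_of_nhds] at lm
    linarith
  have eR : ∀ i j i' j' : ℕ, i + j ≤ 5 → i' + j' ≤ 5 →
      dirD (0, 1) (pd i j F + pd i' j' F) =ᶠ[𝓝 0] pd i (j + 1) F + pd i' (j' + 1) F :=
    fun i j i' j' h h' =>
      (dirD_add _ le_rfl le_rfl (hs i j 1 (by omega)) (hs i' j' 1 (by omega))).trans
        ((pd_succ_right hF (by omega)).add (pd_succ_right hF (by omega)))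
  have eL : ∀ i j i' j' : ℕ, i + j ≤ 5 → i' + j' ≤ 5 →
      dirD (1, 0) (pd i j F + pd i' j' F) =ᶠ[𝓝 0] pd (i + 1) j F + pd (i' + 1) j' F := by
    intro i j i' j' h h'
    rw [← pd_succ_left, ← pd_succ_left]
    exact dirD_add _ le_rfl le_rfl (hs i j 1 (by omega)) (hs i' j' 1 (by omega))
  have d1 := eL 2 0 0 2 (by norm_num) (by norm_num)
  have d2 := eR 2 0 0 2 (by norm_num) (by norm_num)
  have d11 := (dirD_congr (1, 0) d1).trans (eL 3 0 1 2 (by norm_num) (by norm_num))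
  have d12 := (dirD_congr (1, 0) d2).trans (eL 2 1 0 3 (by norm_num) (by norm_num))
  have d22 := (dirD_congr (0, 1) d2).trans (eR 2 1 0 3 (by norm_num) (by norm_num))
  have a0 : ∀ i ≤ 4, pd i 0 F 0 = 0 := fun i hi => (pd_axis hF h0 i (by omega)).self_of_nhds
  have a1 : ∀ i ≤ 4, pd i 1 F 0 = 0 := fun i hi => (pd_axis hF h1 i (by omega)).self_of_nhds
  have s1 := d1.self_of_nhds
  have s2 := d2.self_of_nhds
  have s11 := d11.self_of_nhds
  have s12 := d12.self_of_nhds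
  have s22 := d22.self_of_nhds
  rw [← hLdef] at s1 s2 s11 s12 s22
  rw [hLdef] at l0
  simp only [Pi.add_apply, Nat.reduceAdd] at l0 s1 s2 s11 s12 s22
  have b20 := a0 2 (by norm_num)
  have b30 := a0 3 (by norm_num)
  have b40 := a0 4 (by norm_num)
  have b21 := a1 2 (by norm_num)
  have b31 := a1 3 (by norm_num)
  have b02 : pd 0 2 F 0 = 0 := by linarith
  have b12 : pd 1 2 F 0 = 0 := by linarith
  have b03 : pd 0 3 F 0 = 0 := by linarith
  have b22 : pd 2 2 F 0 = 0 := by linarith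
  have b13 : pd 1 3 F 0 = 0 := by linarith
  have b04 : pd 0 4 F 0 = 0 := by linarith
  refine pd_isBigO (n := 5) (hF.of_le (by norm_num)) (fun i j hij => ?_) 5 0 0 rfl
  have hi : i ≤ 4 := by omega
  have hj : j ≤ 4 := by omega
  interval_cases j
  · exact a0 i hi
  · exact a1 i hi
  · interval_cases i <;> first | assumption | omega
  · interval_cases i <;> first | assumption | omega
  · interval_cases i <;> first | assumption | omega

/-- Abstract form of Lemma 2.2: if `M` is `C⁶` near `0 ∈ ℝ²`, vanishes to second
order on the real axis, and `ΔM(λ) = c|λ|² + O(|λ|³)` as `λ → 0`, then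
`M(σ+iτ) = 2c σ²τ² + O(|λ|⁵)` as `λ = σ+iτ → 0`. -/
theorem cusp_lemma_expansion (M : ℝ → ℝ → ℝ) (c : ℝ)
    (hsmooth : ∃ U ∈ 𝓝 (0 : ℝ × ℝ), ContDiffOn ℝ 6 (fun p : ℝ × ℝ => M p.1 p.2) U)
    (hM0 : ∃ ε > (0:ℝ), ∀ σ : ℝ, |σ| < ε →
      M σ 0 = 0 ∧ deriv (fun t => M σ t) 0 = 0)
    (hlap : ∃ C₁ > (0:ℝ), ∃ δ₁ > (0:ℝ), ∀ σ τ : ℝ, σ ^ 2 + τ ^ 2 ≤ δ₁ ^ 2 →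
      |quarterLap M σ τ - c * (σ ^ 2 + τ ^ 2)| ≤ C₁ * Real.sqrt (σ ^ 2 + τ ^ 2) ^ 3) :
    ∃ δ > (0:ℝ), ∃ C > (0:ℝ), ∀ σ τ : ℝ, σ ^ 2 + τ ^ 2 ≤ δ ^ 2 →
      |M σ τ - 2 * c * σ ^ 2 * τ ^ 2| ≤ C * Real.sqrt (σ ^ 2 + τ ^ 2) ^ 5 := by
  obtain ⟨U, hU, hMU⟩ := hsmooth
  obtain ⟨ε, hε, hM0⟩ := hM0
  obtain ⟨C₁, hC₁, δ₁, hδ₁, hlap⟩ := hlap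
  have hMs : ContDiffAt ℝ (6 : ℕ) (fun p : ℝ × ℝ => M p.1 p.2) 0 := by
    exact_mod_cast hMU.contDiffAt hU
  set N : ℝ × ℝ → ℝ := fun p => M p.1 p.2 - 2 * c * p.1 ^ 2 * p.2 ^ 2 with hN
  have hNs : ContDiffAt ℝ (6 : ℕ) N 0 := hMs.sub (by fun_prop)
  have hfst : ∀ p : ℝ × ℝ, |p.1| ≤ ‖p‖ := fun p => norm_fst_le p
  have hsnd : ∀ p : ℝ × ℝ, |p.2| ≤ ‖p‖ := fun p => norm_snd_le p
  have hsq : ∀ p : ℝ × ℝ, √(p.1 ^ 2 + p.2 ^ 2) ≤ 2 * ‖p‖ := by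
    intro p
    refine Real.sqrt_le_iff.2 ⟨by positivity, ?_⟩
    have h1 := sq_le_sq' (by linarith [abs_nonneg p.1, hfst p]) (hfst p)
    have h2 := sq_le_sq' (by linarith [abs_nonneg p.2, hsnd p]) (hsnd p)
    rw [sq_abs] at h1 h2
    nlinarith [sq_nonneg ‖p‖]
  have hsq' : ∀ p : ℝ × ℝ, ‖p‖ ≤ √(p.1 ^ 2 + p.2 ^ 2) := by
    intro p
    rw [Prod.norm_def]
    refine max_le ?_ ?_ <;> refine Real.abs_le_sqrt ?_ <;> nlinarith [sq_nonneg p.1, sq_nonneg p.2]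
  have haxis : Tendsto (fun s : ℝ => (s, (0 : ℝ))) (𝓝 0) (𝓝 0) := by
    have : Continuous (fun s : ℝ => (s, (0 : ℝ))) := by fun_prop
    exact this.tendsto 0
  have hεn : ∀ᶠ s in 𝓝 (0 : ℝ), |s| < ε := by
    filter_upwards [Metric.ball_mem_nhds (0 : ℝ) hε] with s hs
    simpa using hs
  have h0 : ∀ᶠ s in 𝓝 (0 : ℝ), pd 0 0 N (s, 0) = 0 := by
    filter_upwards [hεn] with s hs
    simp [pd, hN, (hM0 s hs).1]
  have h1 : ∀ᶠ s in 𝓝 (0 : ℝ), pd 0 1 N (s, 0) = 0 := by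
    filter_upwards [hεn, haxis.eventually (eventually_differentiableAt (by norm_num) hMs)]
      with s hs hd
    have hMd : HasDerivAt (fun t => M s t) 0 0 := by
      have e : DifferentiableAt ℝ (fun t => M s t) 0 :=
        hd.comp (0 : ℝ) (f := fun t : ℝ => (s, t)) (by fun_prop)
      simpa [(hM0 s hs).2] using e.hasDerivAt
    have hNd : HasDerivAt (fun t => N (s, t)) 0 0 :=
      (hMd.sub ((hasDerivAt_pow 2 (0 : ℝ)).const_mul (2 * c * s ^ 2))).congr_deriv (by simp)
    have hd' : DifferentiableAt ℝ N (s, 0) := hd.sub (by fun_prop)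
    have := dirD_hasDerivAt (0, 1) (s, 0) 0 (F := N) (by simpa using hd')
    simp only [Prod.smul_mk, Prod.mk_add_mk, smul_eq_mul, mul_zero, mul_one, add_zero, zero_add]
      at this
    exact this.unique hNd
  have hL : (pd 2 0 N + pd 0 2 N) =O[𝓝 0] fun p : ℝ × ℝ => ‖p‖ ^ 3 := by
    refine Asymptotics.IsBigO.of_bound (32 * C₁) ?_
    have hM2 : ContDiffAt ℝ (2 : ℕ) (fun p : ℝ × ℝ => M p.1 p.2) 0 := hMs.of_le (by norm_num)
    filter_upwards [hM2.eventually (by simp),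
      Metric.ball_mem_nhds (0 : ℝ × ℝ) (half_pos hδ₁)] with p hp hpb
    obtain ⟨σ, τ⟩ := p
    have hNp : ContDiffAt ℝ (2 : ℕ) N (σ, τ) := hp.sub (by fun_prop)
    have q : ∀ a x : ℝ, iteratedDeriv 2 (fun s : ℝ => a * s ^ 2) x = 2 * a := by
      intro a x
      rw [iteratedDeriv_const_mul_field]
      simp [mul_comm]
    have e1 : pd 2 0 N (σ, τ) = iteratedDeriv 2 (fun s => M s τ) σ - 4 * c * τ ^ 2 := by
      have e := iteratedDeriv_two_line (1, 0) (0, τ) σ (F := N) (by simpa using hNp)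
      simp only [Prod.smul_mk, Prod.mk_add_mk, smul_eq_mul, mul_zero, mul_one, add_zero, zero_add]
        at e
      have hs : ContDiffAt ℝ (2 : ℕ) (fun s => M s τ) σ :=
        hp.comp σ (f := fun s : ℝ => (s, τ)) (by fun_prop)
      have e' := iteratedDeriv_sub (n := 2) hs
        (g := fun s : ℝ => (2 * c * τ ^ 2) * s ^ 2) (by fun_prop)
      rw [q] at e'
      change dirD (1, 0) (dirD (1, 0) N) (σ, τ) = _
      rw [← e]
      calc _ = iteratedDeriv 2 ((fun s => M s τ) - fun s : ℝ => (2 * c * τ ^ 2) * s ^ 2) σ := by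
            congr 1; funext s; simp only [hN, Pi.sub_apply]; ring
        _ = _ := by rw [e']; ring
    have e2 : pd 0 2 N (σ, τ) = iteratedDeriv 2 (fun t => M σ t) τ - 4 * c * σ ^ 2 := by
      have e := iteratedDeriv_two_line (0, 1) (σ, 0) τ (F := N) (by simpa using hNp)
      simp only [Prod.smul_mk, Prod.mk_add_mk, smul_eq_mul, mul_zero, mul_one, add_zero, zero_add]
        at e
      have hs : ContDiffAt ℝ (2 : ℕ) (fun t => M σ t) τ :=
        hp.comp τ (f := fun t : ℝ => (σ, t)) (by fun_prop)
      have e' := iteratedDeriv_sub (n := 2) hs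
        (g := fun s : ℝ => (2 * c * σ ^ 2) * s ^ 2) (by fun_prop)
      rw [q] at e'
      change dirD (0, 1) (dirD (0, 1) N) (σ, τ) = _
      rw [← e]
      calc _ = iteratedDeriv 2 ((fun t => M σ t) - fun s : ℝ => (2 * c * σ ^ 2) * s ^ 2) τ := by
            congr 1
        _ = _ := by rw [e']; ring
    have e3 : (pd 2 0 N + pd 0 2 N) (σ, τ) = 4 * (quarterLap M σ τ - c * (σ ^ 2 + τ ^ 2)) := by
      rw [Pi.add_apply, e1, e2, quarterLap]; ring
    have hpn : ‖((σ, τ) : ℝ × ℝ)‖ < δ₁ / 2 := by simpa only [mem_ball_zero_iff] using hpb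
    have hr := hsq (σ, τ)
    have hb := hlap σ τ (by
      have : √(σ ^ 2 + τ ^ 2) ≤ δ₁ := by simp only at hr; linarith
      exact (Real.sqrt_le_left hδ₁.le).1 this)
    rw [e3, norm_mul, norm_pow, norm_norm, Real.norm_of_nonneg (by norm_num : (0 : ℝ) ≤ 4),
      Real.norm_eq_abs]
    calc _ ≤ 4 * (C₁ * √(σ ^ 2 + τ ^ 2) ^ 3) := by gcongr
      _ ≤ 4 * (C₁ * (2 * ‖((σ, τ) : ℝ × ℝ)‖) ^ 3) := by gcongr
      _ = _ := by ring
  have hLo : (pd 2 0 N + pd 0 2 N) =o[𝓝 0] fun p : ℝ × ℝ => ‖p‖ ^ 2 :=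
    hL.trans_isLittleO (Asymptotics.isLittleO_norm_pow_norm_pow (by norm_num))
  obtain ⟨C, hC, hfin⟩ := (core_isBigO hNs h0 h1 hLo).exists_pos
  obtain ⟨r, hr, hfin⟩ := Metric.eventually_nhds_iff.1 hfin.bound
  refine ⟨r / 2, half_pos hr, C, hC, fun σ τ hστ => ?_⟩
  have hle : √(σ ^ 2 + τ ^ 2) ≤ r / 2 := (Real.sqrt_le_left (half_pos hr).le).2 hστ
  have hn := hsq' (σ, τ)
  simp only at hn
  have := hfin (y := (σ, τ)) (by rw [dist_zero_right]; linarith)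
  rw [norm_pow, norm_norm, Real.norm_eq_abs] at this
  exact this.trans (by gcongr)
end

section
/- Let f : ℝ → ℝ be C² with compact support, let σ ∈ ℝ and τ > 0. Let P(σ+iτ, t) = (1/π)·τ/((σ−t)² + τ²) be the Poisson kernel of the upper half-plane, and define g : ℝ → ℝ by g(t) = (f(t) − f(σ) − (t−σ)f'(σ))/(t−σ)² for t ≠ σ and g(σ) = f''(σ)/2. Then the principal value pv∫_ℝ g(t) dt := lim_{R→∞} ∫_{σ−R}^{σ+R} g(t) dt exists, the integral ∫_ℝ g(t)·P(σ+iτ, t) dt converges absolutely, and ∫_ℝ f(t)·P(σ+iτ, t) dt − f(σ) = (τ/π)·pv∫_ℝ g(t) dt − τ²·∫_ℝ g(t)·P(σ+iτ, t) dt. -/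
open Real MeasureTheory Filter Topology

/-!
Everything follows from the pointwise identity `(σ - t)² P(t) = τ/π - τ² P(t)`. Multiplying it by
`g` and using `(σ - t)² g(t) = f(t) - f(σ) - (t - σ) f'(σ)` gives
`g = (π/τ) (f P - f(σ) P - f'(σ) (t - σ) P + τ² g P)`.
Integrate this over `[σ - R, σ + R]`: the term `(t - σ) P` is odd about `σ` and drops out, while the
other three terms on the right are integrable over `ℝ`, with `∫ P = 1`. Letting `R → ∞` thus yields
at once the existence of the principal value and the claimed formula. Integrability of `g P` holds
because `g` is bounded, which is the first-order Taylor estimate for `f` with Lipschitz derivative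
(`abs_taylor_one_le`); `P` is the Cauchy density, so its integral is in Mathlib.
-/

/-- First-order Taylor estimate: if `f'` is `C`-Lipschitz then the remainder is at most
`C (t - σ)²`. -/
lemma abs_taylor_one_le {f : ℝ → ℝ} (hf : Differentiable ℝ f) {C : NNReal}
    (hC : LipschitzWith C (deriv f)) (σ t : ℝ) :
    |f t - f σ - (t - σ) * deriv f σ| ≤ C * (t - σ) ^ 2 := by
  have hd : ∀ x ∈ Set.uIcc σ t, HasDerivWithinAt (fun x => f x - (x - σ) * deriv f σ)
      (deriv f x - deriv f σ) (Set.uIcc σ t) x := fun x _ => by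
    have h := (hf x).hasDerivAt.sub (((hasDerivAt_id x).sub_const σ).mul_const (deriv f σ))
    rw [one_mul] at h
    exact h.hasDerivWithinAt
  have hb : ∀ x ∈ Set.uIcc σ t, ‖deriv f x - deriv f σ‖ ≤ C * |t - σ| := fun x hx =>
    (hC.norm_sub_le x σ).trans
      (mul_le_mul_of_nonneg_left (Set.abs_sub_left_of_mem_uIcc hx) C.coe_nonneg)
  have h := (convex_uIcc σ t).norm_image_sub_le_of_norm_hasDerivWithin_le hd hb
    Set.left_mem_uIcc Set.right_mem_uIcc
  rw [Real.norm_eq_abs, Real.norm_eq_abs, mul_assoc, abs_mul_abs_self] at h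
  calc _ = |f t - (t - σ) * deriv f σ - (f σ - (σ - σ) * deriv f σ)| := by congr 1; ring
    _ ≤ _ := h
    _ = _ := by ring

/-- Integrals of functions that are odd about `σ`, over intervals centred at `σ`, vanish. -/
lemma integral_symm_eq_zero_of_odd {h : ℝ → ℝ} {σ : ℝ} (hh : ∀ t, h (2 * σ - t) = -h t) (R : ℝ) :
    ∫ t in σ - R..σ + R, h t = 0 := by
  have h1 := intervalIntegral.integral_comp_sub_left (a := σ - R) (b := σ + R) h (2 * σ)
  simp_rw [hh] at h1
  rw [intervalIntegral.integral_neg, show 2 * σ - (σ + R) = σ - R by ring,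
    show 2 * σ - (σ - R) = σ + R by ring] at h1
  linarith

/-- Identity (2.8): for `f ∈ C²_c(ℝ)`, `σ ∈ ℝ`, `τ > 0`, with
`P(σ+iτ,t) = (1/π)τ/((σ−t)²+τ²)` the Poisson kernel of the upper half-plane and
`g(t) = (f(t) − f(σ) − (t−σ)f'(σ))/(t−σ)²` (with `g(σ) = f''(σ)/2`):
the principal value `pv∫ g` exists, `∫ g·P` converges absolutely, and
`∫ f·P − f(σ) = (τ/π)·pv∫ g − τ²·∫ g·P`. -/
theorem poisson_identity (f : ℝ → ℝ) (hf : ContDiff ℝ 2 f)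
    (hsupp : HasCompactSupport f) (σ τ : ℝ) (hτ : 0 < τ)
    (P : ℝ → ℝ)
    (hP : ∀ t, P t = (1 / Real.pi) * τ / ((σ - t) ^ 2 + τ ^ 2))
    (g : ℝ → ℝ)
    (hg : ∀ t, g t = if t = σ then deriv (deriv f) σ / 2
      else (f t - f σ - (t - σ) * deriv f σ) / (t - σ) ^ 2) :
    ∃ pv : ℝ,
      Tendsto (fun R : ℝ => ∫ t in σ - R..σ + R, g t) atTop (𝓝 pv) ∧
      Integrable (fun t => g t * P t) ∧
      (∫ t : ℝ, f t * P t) - f σ = (τ / Real.pi) * pv - τ ^ 2 * ∫ t : ℝ, g t * P t := by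
  have hπ := Real.pi_pos
  have hden : ∀ t, (σ - t) ^ 2 + τ ^ 2 ≠ 0 := fun t => by positivity
  have hPc : P = ProbabilityTheory.cauchyPDFReal σ τ.toNNReal := by
    funext t
    rw [hP, ProbabilityTheory.cauchyPDFReal_def, Real.coe_toNNReal τ hτ.le,
      ← neg_sq (σ - t), neg_sub, one_div, div_eq_mul_inv]
  have hP1 : ∫ t, P t = 1 := by
    rw [hPc]
    exact ProbabilityTheory.integral_cauchyPDFReal_eq_one σ (Real.toNNReal_pos.2 hτ).ne'
  have hPi : Integrable P := hPc ▸ ProbabilityTheory.integrable_cauchyPDFReal σ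
  have hPcont : Continuous P := by
    rw [funext hP]
    exact continuous_const.div (by fun_prop) hden
  have hfd : Differentiable ℝ f := hf.differentiable (by norm_num)
  have hf' : ContDiff ℝ 1 (deriv f) :=
    (contDiff_succ_iff_deriv.1 (show ContDiff ℝ (1 + 1) f by simpa [one_add_one_eq_two] using hf)).2.2
  obtain ⟨C, hC⟩ := hf'.lipschitzWith_of_hasCompactSupport hsupp.deriv one_ne_zero
  have hgm : Measurable g := by
    rw [funext hg]
    have := hfd.continuous.measurable
    exact Measurable.ite (measurableSet_singleton σ) (by fun_prop) (by fun_prop)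
  have hgb : ∀ t, ‖g t‖ ≤ max |deriv (deriv f) σ / 2| C := fun t => by
    rw [hg, Real.norm_eq_abs]
    split_ifs with h
    · exact le_max_left _ _
    · refine le_trans ?_ (le_max_right _ _)
      have h0 : 0 < (t - σ) ^ 2 := by have := sub_ne_zero.2 h; positivity
      rw [abs_div, abs_of_pos h0, div_le_iff₀ h0]
      exact abs_taylor_one_le hfd hC σ t
  have hgP : Integrable (fun t => g t * P t) :=
    hPi.bdd_mul hgm.aestronglyMeasurable (ae_of_all _ hgb)
  have hfP : Integrable (fun t => f t * P t) := by
    obtain ⟨B, hB⟩ := hsupp.exists_bound_of_continuous hfd.continuous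
    exact hPi.bdd_mul hfd.continuous.aestronglyMeasurable (ae_of_all _ hB)
  have hkey : ∀ t, g t = π / τ *
      (f t * P t - f σ * P t - deriv f σ * ((t - σ) * P t) + τ ^ 2 * (g t * P t)) := fun t => by
    have h1 : g t * (σ - t) ^ 2 = f t - f σ - (t - σ) * deriv f σ := by
      rw [hg]
      split_ifs with h
      · simp [h]
      · have := sub_ne_zero.2 h
        rw [← neg_sq (σ - t), neg_sub]
        field_simp
    have h2 : P t * ((σ - t) ^ 2 + τ ^ 2) = τ / π := by
      rw [hP, div_mul_cancel₀ _ (hden t)]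
      ring
    have h3 : f t * P t - f σ * P t - deriv f σ * ((t - σ) * P t) + τ ^ 2 * (g t * P t)
        = g t * (τ / π) := by
      linear_combination (-P t) * h1 + g t * h2
    rw [h3]
    field_simp
  have hint : ∀ R : ℝ, ∫ t in σ - R..σ + R, g t = π / τ * ((∫ t in σ - R..σ + R, f t * P t)
      - f σ * (∫ t in σ - R..σ + R, P t) + τ ^ 2 * ∫ t in σ - R..σ + R, g t * P t) := fun R => by
    have i1 : IntervalIntegrable (fun t => f t * P t) volume (σ - R) (σ + R) :=
      hfP.intervalIntegrable
    have i2 : IntervalIntegrable (fun t => f σ * P t) volume (σ - R) (σ + R) :=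
      (hPi.const_mul _).intervalIntegrable
    have i3 : IntervalIntegrable (fun t => deriv f σ * ((t - σ) * P t)) volume (σ - R) (σ + R) :=
      Continuous.intervalIntegrable (by fun_prop) _ _
    have i4 : IntervalIntegrable (fun t => τ ^ 2 * (g t * P t)) volume (σ - R) (σ + R) :=
      (hgP.const_mul _).intervalIntegrable
    have hodd : ∫ t in σ - R..σ + R, (t - σ) * P t = 0 :=
      integral_symm_eq_zero_of_odd (fun t => by
        rw [hP, hP, show (σ - (2 * σ - t)) ^ 2 = (σ - t) ^ 2 by ring]
        ring) R
    rw [intervalIntegral.integral_congr (fun t _ => hkey t), intervalIntegral.integral_const_mul,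
      intervalIntegral.integral_add ((i1.sub i2).sub i3) i4,
      intervalIntegral.integral_sub (i1.sub i2) i3, intervalIntegral.integral_sub i1 i2,
      intervalIntegral.integral_const_mul, intervalIntegral.integral_const_mul,
      intervalIntegral.integral_const_mul, hodd, mul_zero, sub_zero]
  have ha : Tendsto (fun R : ℝ => σ - R) atTop atBot :=
    tendsto_atBot_add_const_left _ σ tendsto_neg_atTop_atBot
  have hb : Tendsto (fun R : ℝ => σ + R) atTop atTop := tendsto_atTop_add_const_left _ σ tendsto_id
  refine ⟨π / τ * ((∫ t, f t * P t) - f σ * (∫ t, P t) + τ ^ 2 * ∫ t, g t * P t), ?_, hgP, ?_⟩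
  · simp_rw [hint]
    exact (((intervalIntegral_tendsto_integral hfP ha hb).sub
      ((intervalIntegral_tendsto_integral hPi ha hb).const_mul _)).add
      ((intervalIntegral_tendsto_integral hgP ha hb).const_mul _)).const_mul _
  · rw [hP1]
    field_simp
    ring
end

section
/- Let f : ℝ → ℝ be C² with compact support and let σ ∈ ℝ. Let P_f(σ+iτ) = ∫_ℝ f(t)·(1/π)·τ/((σ−t)² + τ²) dt denote the Poisson integral of f, and define g : ℝ → ℝ by g(t) = (f(t) − f(σ) − (t−σ)f'(σ))/(t−σ)² for t ≠ σ and g(σ) = f''(σ)/2. Then lim_{τ→0⁺} (P_f(σ+iτ) − f(σ))/τ = (1/π)·pv∫_ℝ g(t) dt, where pv∫_ℝ g(t) dt = lim_{R→∞} ∫_{σ−R}^{σ+R} g(t) dt. -/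
/-!
The proof symmetrizes both sides about `σ`. Put `D(s) = f(σ+s) + f(σ-s) - 2 f(σ)`. In
`g(σ+s) + g(σ-s)` the first-order terms cancel, leaving `D(s)/s²`, so the truncated integrals of `g`
are half of `∫_{-R}^{R} D(s)/s² ds`. Likewise, since the Poisson kernel is even with total mass one,
`(P_f(σ+iτ) - f(σ))/τ = (1/(2π)) ∫ D(s)/(s²+τ²) ds`. The function `D(s)/s²` is absolutely
integrable: `|D(s)| ≤ 2Cs²` by Taylor's inequality, as `f'` is Lipschitz
(`taylor_bound_of_lipschitz`), and `D` is bounded (`second_difference_bound`). It dominates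
`D(s)/(s²+τ²)`, so both limits exist and the common value is `pv = ½ ∫ D(s)/s² ds`.
-/

open Real MeasureTheory Filter Topology

lemma taylor_bound_of_lipschitz {f : ℝ → ℝ} (hf : Differentiable ℝ f) {C : NNReal}
    (hC : LipschitzWith C (deriv f)) (σ s : ℝ) :
    |f (σ + s) - f σ - s * deriv f σ| ≤ C * s ^ 2 := by
  have hd : ∀ u ∈ Set.Icc (-|s|) |s|, HasDerivWithinAt (fun u => f (σ + u) - u * deriv f σ)
      (deriv f (σ + u) - deriv f σ) (Set.Icc (-|s|) |s|) u := by
    intro u _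
    have h1 : HasDerivAt (fun u => f (σ + u)) (deriv f (σ + u)) u :=
      (hf (σ + u)).hasDerivAt.comp_const_add σ u
    have h2 : HasDerivAt (fun u => u * deriv f σ) (deriv f σ) u := by
      simpa using (hasDerivAt_id u).mul_const (deriv f σ)
    exact (h1.sub h2).hasDerivWithinAt
  have hb : ∀ u ∈ Set.Icc (-|s|) |s|, ‖deriv f (σ + u) - deriv f σ‖ ≤ C * |s| := by
    intro u hu
    have h := hC.dist_le_mul (σ + u) σ
    rw [Real.dist_eq, Real.dist_eq, add_sub_cancel_left] at h
    exact h.trans (mul_le_mul_of_nonneg_left (abs_le.2 hu) C.2)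
  have h := Convex.norm_image_sub_le_of_norm_hasDerivWithin_le hd hb (convex_Icc _ _)
    (x := 0) (y := s) ⟨by simp, by simp⟩ ⟨neg_abs_le s, le_abs_self s⟩
  simp only [add_zero, zero_mul, sub_zero, Real.norm_eq_abs] at h
  rw [mul_assoc, abs_mul_abs_self] at h
  calc _ = |f (σ + s) - s * deriv f σ - f σ| := by congr 1; ring
    _ ≤ _ := by rw [pow_two]; exact h

/-- Combining the quadratic bound near `0` with boundedness gives an integrable majorant. -/
lemma second_difference_bound {f : ℝ → ℝ} (hf : Differentiable ℝ f) {C : NNReal}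
    (hC : LipschitzWith C (deriv f)) {M : ℝ} (hM : ∀ x, ‖f x‖ ≤ M) (σ s : ℝ) :
    ‖(f (σ + s) + f (σ - s) - 2 * f σ) / s ^ 2‖ ≤ (2 * C + 4 * M) * (1 + s ^ 2)⁻¹ := by
  have h1 := taylor_bound_of_lipschitz hf hC σ s
  have h2 := taylor_bound_of_lipschitz hf hC σ (-s)
  rw [← sub_eq_add_neg] at h2
  have m1 := hM (σ + s)
  have m2 := hM (σ - s)
  have m3 := hM σ
  simp only [Real.norm_eq_abs] at m1 m2 m3
  rw [abs_le] at h1 h2 m1 m2 m3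
  have hM0 : 0 ≤ M := by linarith
  have hC0 : (0 : ℝ) ≤ C := C.2
  have hD1 : |f (σ + s) + f (σ - s) - 2 * f σ| ≤ 2 * C * s ^ 2 := by
    rw [abs_le]; constructor <;> nlinarith
  have hD2 : |f (σ + s) + f (σ - s) - 2 * f σ| ≤ 4 * M := by
    rw [abs_le]; constructor <;> linarith
  rcases eq_or_ne s 0 with rfl | hs
  · simp; positivity
  have hs2 : 0 < s ^ 2 := by positivity
  rw [norm_div, Real.norm_eq_abs, Real.norm_eq_abs, abs_of_pos hs2, ← div_eq_mul_inv,
    div_le_div_iff₀ hs2 (by positivity)]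
  nlinarith [mul_le_mul_of_nonneg_right hD2 hs2.le]

lemma integrable_poisson_kernel {τ : ℝ} (hτ : 0 < τ) :
    Integrable (fun s : ℝ => (1 / π) * τ / (s ^ 2 + τ ^ 2)) ∧
      ∫ s : ℝ, (1 / π) * τ / (s ^ 2 + τ ^ 2) = 1 := by
  have he : (fun s : ℝ => (1 / π) * τ / (s ^ 2 + τ ^ 2)) =
      fun s => (1 / (π * τ)) * (1 + (s / τ) ^ 2)⁻¹ := by
    funext s
    have : s ^ 2 + τ ^ 2 ≠ 0 := by positivity
    field_simp
    ring
  rw [he]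
  refine ⟨(integrable_inv_one_add_sq.comp_div hτ.ne').const_mul _, ?_⟩
  rw [integral_const_mul, Measure.integral_comp_div (fun x : ℝ => (1 + x ^ 2)⁻¹) τ,
    integral_univ_inv_one_add_sq, abs_of_pos hτ, smul_eq_mul]
  field_simp

theorem poisson_normal_derivative (f : ℝ → ℝ) (hf : ContDiff ℝ 2 f)
    (hsupp : HasCompactSupport f) (σ : ℝ)
    (g : ℝ → ℝ)
    (hg : ∀ t, g t = if t = σ then deriv (deriv f) σ / 2
      else (f t - f σ - (t - σ) * deriv f σ) / (t - σ) ^ 2) :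
    ∃ pv : ℝ,
      Tendsto (fun R : ℝ => ∫ t in σ - R..σ + R, g t) atTop (𝓝 pv) ∧
      Tendsto
        (fun τ : ℝ =>
          ((∫ t : ℝ, f t * ((1 / Real.pi) * τ / ((σ - t) ^ 2 + τ ^ 2))) - f σ) / τ)
        (𝓝[>] 0) (𝓝 ((1 / Real.pi) * pv)) := by
  have hfd : Differentiable ℝ f := hf.differentiable (by norm_num)
  have hfc : Continuous f := hf.continuous
  have hf' : ContDiff ℝ 1 (deriv f) := by
    have h2 : ContDiff ℝ (1 + 1) f := by
      rw [one_add_one_eq_two]; exact hf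
    exact (contDiff_succ_iff_deriv.1 h2).2.2
  obtain ⟨C, hC⟩ := hf'.lipschitzWith_of_hasCompactSupport hsupp.deriv one_ne_zero
  obtain ⟨M, hM⟩ := hsupp.exists_bound_of_continuous hfc
  set D : ℝ → ℝ := fun s => f (σ + s) + f (σ - s) - 2 * f σ with hD
  have hDc : Continuous D := by fun_prop
  have hbd : ∀ s, ‖D s / s ^ 2‖ ≤ (2 * C + 4 * M) * (1 + s ^ 2)⁻¹ :=
    second_difference_bound hfd hC hM σ
  have hint : Integrable (fun s => D s / s ^ 2) :=
    (integrable_inv_one_add_sq.const_mul (2 * (C : ℝ) + 4 * M)).mono'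
      (hDc.measurable.div (by fun_prop)).aestronglyMeasurable (ae_of_all _ hbd)
  have hne : ∀ᵐ s : ℝ, s ≠ 0 := by
    simp [ae_iff]
  refine ⟨(1 / 2) * ∫ s, D s / s ^ 2, ?_, ?_⟩
  · have hgm : Measurable g := by
      have : g = fun t => if t = σ then deriv (deriv f) σ / 2
          else (f t - f σ - (t - σ) * deriv f σ) / (t - σ) ^ 2 := funext hg
      rw [this]
      refine Measurable.ite (measurableSet_singleton σ) measurable_const ?_
      exact Measurable.div (by fun_prop) (by fun_prop)
    have hgb : ∀ s, ‖g (σ + s)‖ ≤ max (C : ℝ) |deriv (deriv f) σ / 2| := by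
      intro s
      rw [hg, Real.norm_eq_abs]
      split_ifs with h
      · exact le_max_right _ _
      · have hs : s ≠ 0 := fun h0 => h (by simp [h0])
        refine le_trans ?_ (le_max_left _ _)
        rw [add_sub_cancel_left, abs_div, abs_of_nonneg (sq_nonneg s),
          div_le_iff₀ (by positivity)]
        exact taylor_bound_of_lipschitz hfd hC σ s
    have hgi : ∀ a b, IntervalIntegrable (fun s => g (σ + s)) volume a b := by
      intro a b
      refine (intervalIntegrable_const (c := max (C : ℝ) |deriv (deriv f) σ / 2|)).mono_fun'
        (hgm.comp (measurable_const_add σ)).aestronglyMeasurable (ae_of_all _ hgb)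
    have key : ∀ R : ℝ, ∫ t in σ - R..σ + R, g t = (1 / 2) * ∫ s in -R..R, D s / s ^ 2 := by
      intro R
      have e1 : ∫ s in -R..R, g (σ + s) = ∫ t in σ - R..σ + R, g t := by
        rw [intervalIntegral.integral_comp_add_left, ← sub_eq_add_neg]
      have e2 : ∫ s in -R..R, g (σ - s) = ∫ t in σ - R..σ + R, g t := by
        rw [intervalIntegral.integral_comp_sub_left, sub_neg_eq_add]
      have hgi2 : IntervalIntegrable (fun s => g (σ - s)) volume (-R) R := by
        have := (hgi R (-R)).comp_sub_left 0
        simpa [sub_eq_add_neg] using this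
      have e3 : ∫ s in -R..R, D s / s ^ 2 = ∫ s in -R..R, (g (σ + s) + g (σ - s)) := by
        refine intervalIntegral.integral_congr_ae ?_
        filter_upwards [hne] with s hs _
        rw [hg, hg, if_neg (by simpa using hs), if_neg (by simpa using hs), hD,
          show σ + s - σ = s by ring, show σ - s - σ = -s by ring, neg_sq, ← add_div]
        ring
      rw [e3, intervalIntegral.integral_add (hgi _ _) hgi2, e1, e2]
      ring
    simp_rw [key]
    exact (intervalIntegral_tendsto_integral hint tendsto_neg_atTop_atBot tendsto_id).const_mul _
  · have key : ∀ τ : ℝ, 0 < τ →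
        ((∫ t : ℝ, f t * ((1 / π) * τ / ((σ - t) ^ 2 + τ ^ 2))) - f σ) / τ =
          (1 / π) * ((1 / 2) * ∫ s, D s / (s ^ 2 + τ ^ 2)) := by
      intro τ hτ
      obtain ⟨pi, p1⟩ := integrable_poisson_kernel hτ
      set p : ℝ → ℝ := fun s => (1 / π) * τ / (s ^ 2 + τ ^ 2) with hp
      set I := ∫ t : ℝ, f t * ((1 / π) * τ / ((σ - t) ^ 2 + τ ^ 2)) with hI
      have e1 : ∫ s, f (σ + s) * p s = I := by
        rw [hI, ← integral_add_left_eq_self (fun t => f t * (1 / π * τ / ((σ - t) ^ 2 + τ ^ 2))) σ]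
        congr 1; funext s; simp [hp]
      have e2 : ∫ s, f (σ - s) * p s = I := by
        rw [hI, ← integral_sub_left_eq_self
          (fun t => f t * (1 / π * τ / ((σ - t) ^ 2 + τ ^ 2))) _ σ]
        congr 1; funext s; simp [hp]
      have i1 : Integrable (fun s => f (σ + s) * p s) :=
        pi.bdd_mul (c := M) (by fun_prop) (ae_of_all _ fun s => hM _)
      have i2 : Integrable (fun s => f (σ - s) * p s) :=
        pi.bdd_mul (c := M) (by fun_prop) (ae_of_all _ fun s => hM _)
      have e3 : ∫ s, D s * p s = 2 * (I - f σ) := by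
        calc ∫ s, D s * p s
            = ∫ s, ((f (σ + s) * p s + f (σ - s) * p s) - 2 * f σ * p s) := by
              congr 1; funext s; simp only [hD]; ring
          _ = _ := by
              have i3 : Integrable (fun s => f (σ + s) * p s + f (σ - s) * p s) := i1.add i2
              rw [integral_sub i3 (pi.const_mul _), integral_add i1 i2, e1, e2,
                integral_const_mul, p1]
              ring
      have e4 : ∫ s, D s * p s = (τ / π) * ∫ s, D s / (s ^ 2 + τ ^ 2) := by
        rw [← integral_const_mul]
        congr 1; funext s; simp only [hp]; ring
      have e5 : I - f σ = (1 / 2) * ((τ / π) * ∫ s, D s / (s ^ 2 + τ ^ 2)) := by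
        rw [← e4, e3]; ring
      rw [e5]
      field_simp
    have hlim : Tendsto (fun τ : ℝ => ∫ s, D s / (s ^ 2 + τ ^ 2)) (𝓝[>] 0)
        (𝓝 (∫ s, D s / s ^ 2)) := by
      refine tendsto_integral_filter_of_dominated_convergence (fun s => ‖D s / s ^ 2‖)
        (Eventually.of_forall fun τ =>
          (hDc.measurable.div (by fun_prop)).aestronglyMeasurable) ?_ hint.norm ?_
      · refine Eventually.of_forall fun τ => ?_
        filter_upwards [hne] with s hs
        rw [norm_div, norm_div, Real.norm_of_nonneg (by positivity : 0 ≤ s ^ 2 + τ ^ 2),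
          Real.norm_of_nonneg (sq_nonneg s)]
        have : 0 < s ^ 2 := by positivity
        gcongr
        nlinarith [sq_nonneg τ]
      · filter_upwards [hne] with s hs
        have hc : ContinuousAt (fun τ : ℝ => D s / (s ^ 2 + τ ^ 2)) 0 := by
          refine ContinuousAt.div (by fun_prop) (by fun_prop) ?_
          positivity
        simpa using hc.tendsto.mono_left nhdsWithin_le_nhds
    refine ((hlim.const_mul (1 / 2)).const_mul (1 / π)).congr' ?_
    filter_upwards [self_mem_nhdsWithin] with τ hτ
    exact (key τ hτ).symm
end

section
/- Let f : ℝ → ℝ be smooth (C^∞) with compact support and let σ ∈ ℝ. Let S_σ denote the backward shift S_σh(t) = (h(t) − h(σ))/(t−σ) (with value h'(σ) at t = σ), and for k = 1, 2 set I_f^k(σ) = (1/π)·pv∫_ℝ S_σ^{2k}f(t) dt, where pv∫_ℝ = lim_{R→∞}∫_{σ−R}^{σ+R} (these limits exist). Let P_f(σ+iτ) = ∫_ℝ f(t)·(1/π)·τ/((σ−t)²+τ²) dt. Then, as τ → 0⁺, P_f(σ+iτ) = f(σ) + I_f^1(σ)·τ − (1/2)f''(σ)·τ² − I_f^2(σ)·τ³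 + (1/24)f⁗(σ)·τ⁴ + O(τ⁵). -/
/-!
The expansion comes from iterating one identity. Write `S = backShift σ`. If
`h(t) = c₀ + c₁ (t - σ) + (t - σ)² S²h(t)`, then integrating against the Poisson kernel `K_τ`,
which is even about `σ`, has mass one and satisfies `s² K_τ(s) = τ/π - τ² K_τ(s)`, gives
`P_h = c₀ + (τ/π) · pv∫ S²h - τ² P_{S²h}` (`poisson_step`). The linear term is killed by parity,
and only the even part of `S²h` about `σ` matters: that part is `O(1/(1+s²))`, hence absolutely
integrable, and its integral is the principal value.

To iterate, one needs a class of functions stable under `S`. Differentiability of `Sh` at `σ`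
is not tracked through smoothness; instead the class `HasExpansion σ h c` consists of functions
with a formal Taylor series at `σ` whose remainders satisfy global bounds
`|h(σ+s) - ∑_{j<n} c_j s^j| ≤ C_n |s|^n`. Smooth compactly supported functions belong to it
(`hasExpansion_of_smooth`), and `S` just shifts the coefficients (`HasExpansion.backShift`).
Applying the identity to `f`, `S²f` and `S⁴f`, and bounding the Poisson integral of `S⁶f` by
`sup |S⁶f|`, yields the result with error `O(τ⁵)`.
-/

open Real MeasureTheory Filter Topology

/-- The backward shift `S_σ h(t) = (h(t) − h(σ))/(t − σ)`, extended continuously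
by `S_σ h(σ) = h'(σ)`. -/
noncomputable def backShift (σ : ℝ) (h : ℝ → ℝ) : ℝ → ℝ :=
  fun t => if t = σ then deriv h σ else (h t - h σ) / (t - σ)

/-- `h` has the formal power series `∑ c j * (t - σ) ^ j` as an asymptotic expansion at `σ`, with
remainder bounds valid on the whole line (so in particular `h` is bounded: take `n = 0`). -/
def HasExpansion (σ : ℝ) (h : ℝ → ℝ) (c : ℕ → ℝ) : Prop :=
  ∀ n : ℕ, ∃ C : ℝ, ∀ s : ℝ, |h (σ + s) - ∑ j ∈ Finset.range n, c j * s ^ j| ≤ C * |s| ^ n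

/-- The even part of `g` about `σ`, as a function of the offset `s = t - σ`. -/
noncomputable def evenPart (σ : ℝ) (g : ℝ → ℝ) (s : ℝ) : ℝ := (g (σ + s) + g (σ - s)) / 2

/-- The Poisson kernel of the upper half-plane at height `τ`, as a function of the offset. -/
noncomputable def poissonKer (τ s : ℝ) : ℝ := (1 / Real.pi) * τ / (s ^ 2 + τ ^ 2)

/-- Taylor's theorem with global remainder bounds. By induction on the order: integrate the bound
for `deriv f`, using that the derivative of the remainder of `f` is the remainder of `deriv f`. -/
theorem hasExpansion_of_smooth (σ : ℝ) {f : ℝ → ℝ} (hf : ContDiff ℝ (⊤ : ℕ∞) f)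
    (hsupp : HasCompactSupport f) :
    HasExpansion σ f (fun j => iteratedDeriv j f σ / (j.factorial : ℝ)) := by
  intro n
  induction n generalizing f with
  | zero =>
    obtain ⟨C, hC⟩ := hsupp.exists_bound_of_continuous hf.continuous
    exact ⟨C, fun s => by simpa using hC (σ + s)⟩
  | succ n ih =>
    have hf' : ContDiff ℝ (⊤ : ℕ∞) (deriv f) := by
      exact (contDiff_infty_iff_deriv.1 hf).2
    obtain ⟨C, hC⟩ := ih hf' hsupp.deriv
    refine ⟨C, fun x => ?_⟩
    have hC0 : 0 ≤ C * |x| ^ n := (abs_nonneg _).trans (hC x)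
    set D : ℝ → ℝ := fun s => f (σ + s) -
      ∑ j ∈ Finset.range (n + 1), iteratedDeriv j f σ / (j.factorial : ℝ) * s ^ j with hD
    have hder : ∀ s, HasDerivAt D (deriv f (σ + s) - ∑ j ∈ Finset.range n,
        iteratedDeriv j (deriv f) σ / (j.factorial : ℝ) * s ^ j) s := by
      intro s
      have h1 : HasDerivAt (fun s => f (σ + s)) (deriv f (σ + s)) s := by
        have := (hf.differentiable (by simp) (σ + s)).hasDerivAt
        exact this.comp_const_add σ s
      have h2 : HasDerivAt (fun s : ℝ => ∑ j ∈ Finset.range (n + 1),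
          iteratedDeriv j f σ / (j.factorial : ℝ) * s ^ j)
          (∑ j ∈ Finset.range (n + 1),
            iteratedDeriv j f σ / (j.factorial : ℝ) * ((j : ℝ) * s ^ (j - 1))) s :=
        HasDerivAt.fun_sum fun j _ => (hasDerivAt_pow j s).const_mul _
      refine (h1.sub h2).congr_deriv ?_
      congr 1
      rw [Finset.sum_range_succ']
      simp only [Nat.cast_zero, zero_mul, mul_zero, add_zero]
      refine Finset.sum_congr rfl fun j _ => ?_
      have : ((j : ℝ) + 1) ≠ 0 := by positivity
      rw [iteratedDeriv_succ', Nat.factorial_succ, Nat.add_sub_cancel]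
      push_cast
      field_simp
    have hD0 : D 0 = 0 := by
      simp [hD, Finset.sum_range_succ']
    have hmv := (convex_closedBall (0 : ℝ) |x|).norm_image_sub_le_of_norm_hasDerivWithin_le
      (f := D) (C := C * |x| ^ n) (x := 0) (y := x)
      (fun s _ => (hder s).hasDerivWithinAt)
      (fun s hs => by
        have hs' : |s| ≤ |x| := by simpa using hs
        rw [Real.norm_eq_abs]
        refine (hC s).trans ?_
        rcases eq_or_ne n 0 with rfl | hn
        · simp
        rcases eq_or_ne s 0 with rfl | hs0
        · simpa [hn] using hC0
        -- `C` is nonnegative as soon as the bound is tested at some nonzero offset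
        have hCnn : 0 ≤ C := by
          have := (abs_nonneg _).trans (hC s)
          exact nonneg_of_mul_nonneg_left this (by positivity)
        gcongr)
      (by simp) (by simp)
    rw [hD0, sub_zero, sub_zero, Real.norm_eq_abs, Real.norm_eq_abs, mul_assoc, ← pow_succ] at hmv
    exact hmv

namespace HasExpansion

variable {σ : ℝ} {h : ℝ → ℝ} {c : ℕ → ℝ}

theorem bounded (H : HasExpansion σ h c) : ∃ C, ∀ t, |h t| ≤ C := by
  obtain ⟨C, hC⟩ := H 0
  exact ⟨C, fun t => by simpa using hC (t - σ)⟩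

theorem apply_self (H : HasExpansion σ h c) : h σ = c 0 := by
  obtain ⟨C, hC⟩ := H 1
  have := hC 0
  simp only [Finset.range_one, Finset.sum_singleton, pow_zero, pow_one, abs_zero, mul_zero,
    add_zero, mul_one] at this
  linarith [abs_nonpos_iff.1 this]

theorem deriv_self (H : HasExpansion σ h c) : deriv h σ = c 1 := by
  obtain ⟨C, hC⟩ := H 2
  refine HasDerivAt.deriv ?_
  rw [hasDerivAt_iff_isLittleO_nhds_zero]
  refine Asymptotics.IsBigO.trans_isLittleO (g := fun s : ℝ => s ^ 2) ?_ ?_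
  · refine Asymptotics.IsBigO.of_bound C (Eventually.of_forall fun s => ?_)
    have := hC s
    simp only [Finset.sum_range_succ, Finset.range_zero, Finset.sum_empty] at this
    rw [H.apply_self, Real.norm_eq_abs, Real.norm_eq_abs, abs_pow, smul_eq_mul]
    convert this using 2
    ring
  · simpa using Asymptotics.isLittleO_pow_pow (𝕜 := ℝ) (one_lt_two)

/-- The backward shift shifts the coefficients of the expansion. -/
protected theorem backShift (H : HasExpansion σ h c) :
    HasExpansion σ (backShift σ h) (fun j => c (j + 1)) := by
  intro n
  obtain ⟨C, hC⟩ := H (n + 1)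
  -- the second term of the maximum covers `s = 0`, where only `n = 0` is not trivial
  refine ⟨max C |c 1|, fun s => ?_⟩
  rcases eq_or_ne s 0 with rfl | hs
  · rcases n with _ | n
    · simp [_root_.backShift, H.deriv_self]
    · simp [_root_.backShift, H.deriv_self, Finset.sum_range_succ']
  · have hs' : 0 < |s| := abs_pos.2 hs
    have e : backShift σ h (σ + s) - ∑ j ∈ Finset.range n, c (j + 1) * s ^ j
        = (h (σ + s) - ∑ j ∈ Finset.range (n + 1), c j * s ^ j) / s := by
      rw [eq_div_iff hs, Finset.sum_range_succ', sub_mul, Finset.sum_mul]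
      simp only [_root_.backShift, add_eq_left, hs, if_false, add_sub_cancel_left,
        H.apply_self, pow_succ, pow_zero, mul_one, ← mul_assoc]
      field_simp
      ring
    rw [e, abs_div, div_le_iff₀ hs']
    refine (hC s).trans ?_
    rw [pow_succ, ← mul_assoc]
    gcongr
    exact le_max_left _ _

theorem iterate_backShift (H : HasExpansion σ h c) (n : ℕ) :
    HasExpansion σ ((_root_.backShift σ)^[n] h) (fun j => c (j + n)) := by
  induction n with
  | zero => simpa using H
  | succ n ih =>
    rw [Function.iterate_succ_apply']
    convert ih.backShift using 2 with j
    congr 1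
    ring

/-- For even parts, two backward shifts amount to removing the constant term and dividing by
`s ^ 2`: the linear term is odd. -/
theorem evenPart_eq (H : HasExpansion σ h c) {s : ℝ} (hs : s ≠ 0) :
    evenPart σ h s = c 0 + s ^ 2 * evenPart σ (_root_.backShift σ (_root_.backShift σ h)) s := by
  have e1 := H.backShift.apply_self
  have e0 := H.apply_self
  simp only [zero_add] at e1
  have A : ∀ g : ℝ → ℝ, _root_.backShift σ g (σ + s) = (g (σ + s) - g σ) / s := fun g => by
    simp [_root_.backShift, hs]
  have B : ∀ g : ℝ → ℝ, _root_.backShift σ g (σ - s) = (g (σ - s) - g σ) / (-s) := fun g => by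
    simp [_root_.backShift, hs]
  rw [evenPart, evenPart, A, B, e1, A, B, e0]
  field_simp
  ring

end HasExpansion

theorem measurable_backShift (σ : ℝ) {h : ℝ → ℝ} (hm : Measurable h) :
    Measurable (backShift σ h) := by
  unfold backShift
  refine Measurable.ite (measurableSet_singleton σ) measurable_const ?_
  exact (hm.sub measurable_const).div (measurable_id.sub measurable_const)

theorem measurable_evenPart (σ : ℝ) {g : ℝ → ℝ} (hm : Measurable g) :
    Measurable (evenPart σ g) := by
  unfold evenPart
  fun_prop

theorem abs_evenPart_le {σ C : ℝ} {g : ℝ → ℝ} (hC : ∀ t, |g t| ≤ C) (s : ℝ) :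
    |evenPart σ g s| ≤ C := by
  have h1 := abs_le.1 (hC (σ + s))
  have h2 := abs_le.1 (hC (σ - s))
  rw [evenPart, abs_le]
  constructor <;> linarith

theorem integral_evenPart (σ : ℝ) {g : ℝ → ℝ} (hg : Integrable g) :
    ∫ s, evenPart σ g s = ∫ t, g t := by
  unfold evenPart
  rw [integral_div, integral_add (hg.comp_add_left σ) (hg.comp_sub_left σ),
    integral_add_left_eq_self g σ, integral_sub_left_eq_self g volume σ]
  ring

theorem intervalIntegral_evenPart (σ R C : ℝ) {g : ℝ → ℝ} (hm : Measurable g)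
    (hC : ∀ t, |g t| ≤ C) :
    ∫ s in -R..R, evenPart σ g s = ∫ t in σ - R..σ + R, g t := by
  have hi : ∀ φ : ℝ → ℝ, Measurable φ → IntervalIntegrable (fun s => g (φ s)) volume (-R) R :=
    fun φ hφ => (intervalIntegrable_const (c := C)).mono_fun
      (hm.comp hφ).aestronglyMeasurable
      (Eventually.of_forall fun s => by
        simpa using (hC (φ s)).trans (le_abs_self C))
  unfold evenPart
  rw [intervalIntegral.integral_div, intervalIntegral.integral_add
    (hi (fun s => σ + s) (by fun_prop)) (hi (fun s => σ - s) (by fun_prop)),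
    intervalIntegral.integral_comp_add_left, intervalIntegral.integral_comp_sub_left]
  simp only [sub_neg_eq_add, ← sub_eq_add_neg]
  ring

theorem poissonKer_eq {τ : ℝ} (hτ : 0 < τ) (s : ℝ) :
    poissonKer τ s = (1 / (Real.pi * τ)) * (1 + (s / τ) ^ 2)⁻¹ := by
  have : 0 < s ^ 2 + τ ^ 2 := by positivity
  have h2 : 0 < 1 + (s / τ) ^ 2 := by positivity
  have h3 : (1 + (s / τ) ^ 2) = (s ^ 2 + τ ^ 2) / τ ^ 2 := by field_simp; ring
  rw [poissonKer, h3]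
  field_simp

theorem integrable_poissonKer {τ : ℝ} (hτ : 0 < τ) : Integrable (poissonKer τ) := by
  simp only [funext (poissonKer_eq hτ)]
  exact (integrable_inv_one_add_sq.comp_div hτ.ne').const_mul _

theorem integral_poissonKer {τ : ℝ} (hτ : 0 < τ) : ∫ s, poissonKer τ s = 1 := by
  simp only [poissonKer_eq hτ]
  rw [integral_const_mul, Measure.integral_comp_div (fun x : ℝ => (1 + x ^ 2)⁻¹) τ,
    integral_univ_inv_one_add_sq, abs_of_pos hτ, smul_eq_mul]
  field_simp

theorem poissonKer_nonneg {τ : ℝ} (hτ : 0 < τ) (s : ℝ) : 0 ≤ poissonKer τ s := by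
  unfold poissonKer
  positivity

theorem integrable_bounded_mul {C : ℝ} {g φ : ℝ → ℝ} (hm : Measurable g)
    (hC : ∀ t, |g t| ≤ C) (hφ : Integrable φ) : Integrable fun s => g s * φ s :=
  hφ.bdd_mul hm.aestronglyMeasurable (Eventually.of_forall hC)

/-- The Poisson kernel is even, so only the even part of `h` contributes. -/
theorem poisson_eq_evenPart {τ C : ℝ} (σ : ℝ) (hτ : 0 < τ) {h : ℝ → ℝ} (hm : Measurable h)
    (hC : ∀ t, |h t| ≤ C) :
    ∫ t, h t * poissonKer τ (σ - t) = ∫ s, evenPart σ h s * poissonKer τ s := by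
  rw [← integral_evenPart σ (integrable_bounded_mul hm hC
    ((integrable_poissonKer hτ).comp_sub_left σ))]
  refine integral_congr_ae (Eventually.of_forall fun s => ?_)
  simp only [evenPart, poissonKer]
  ring_nf

theorem abs_poisson_le {τ C : ℝ} (σ : ℝ) (hτ : 0 < τ) {h : ℝ → ℝ} (hC : ∀ t, |h t| ≤ C) :
    |∫ t, h t * poissonKer τ (σ - t)| ≤ C := by
  have hK := (integrable_poissonKer hτ).comp_sub_left σ
  have := norm_integral_le_of_norm_le (f := fun t => h t * poissonKer τ (σ - t))
    (hK.const_mul C) (Eventually.of_forall fun t => by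
      rw [norm_mul, Real.norm_eq_abs, Real.norm_eq_abs, abs_of_nonneg (poissonKer_nonneg hτ _)]
      exact mul_le_mul_of_nonneg_right (hC t) (poissonKer_nonneg hτ _))
  rwa [integral_const_mul, integral_sub_left_eq_self (poissonKer τ) volume σ,
    integral_poissonKer hτ, mul_one, Real.norm_eq_abs] at this

/-- The identity to be iterated: the principal value of `S²h` exists, and
`P_h = c₀ + I τ - τ² P_{S²h}` with `π I = pv∫ S²h`. -/
theorem poisson_step {σ : ℝ} {h : ℝ → ℝ} {c : ℕ → ℝ} (hm : Measurable h)
    (H : HasExpansion σ h c) :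
    ∃ I : ℝ, Tendsto (fun R : ℝ => ∫ t in σ - R..σ + R, (backShift σ)^[2] h t) atTop
        (𝓝 (Real.pi * I)) ∧
      ∀ τ : ℝ, 0 < τ → ∫ t, h t * poissonKer τ (σ - t) =
        c 0 + I * τ - τ ^ 2 * ∫ t, (backShift σ)^[2] h t * poissonKer τ (σ - t) := by
  set g := (backShift σ)^[2] h with hg
  have hgm : Measurable g := measurable_backShift σ (measurable_backShift σ hm)
  obtain ⟨A, hA⟩ := H.bounded
  obtain ⟨B, hB⟩ := (H.iterate_backShift 2).bounded
  have hrel : ∀ s, s ≠ 0 → evenPart σ h s = c 0 + s ^ 2 * evenPart σ g s :=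
    fun s hs => H.evenPart_eq hs
  -- `s² · evenPart g` is bounded since `evenPart h` is, whence decay like `1 / (1 + s²)`
  have hint : Integrable (evenPart σ g) := by
    refine (integrable_inv_one_add_sq.const_mul (A + |c 0| + B)).mono'
      (measurable_evenPart σ hgm).aestronglyMeasurable (Eventually.of_forall fun s => ?_)
    have hb := abs_evenPart_le (σ := σ) hB s
    have ha := abs_evenPart_le (σ := σ) hA s
    have hs2 : s ^ 2 * |evenPart σ g s| ≤ A + |c 0| := by
      rcases eq_or_ne s 0 with rfl | hs
      · have : 0 ≤ A := (abs_nonneg _).trans ha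
        simp only [ne_eq, OfNat.ofNat_ne_zero, not_false_eq_true, zero_pow, zero_mul]
        positivity
      · have e : s ^ 2 * evenPart σ g s = evenPart σ h s - c 0 := by rw [hrel s hs]; ring
        rw [← abs_of_nonneg (sq_nonneg s), ← abs_mul, e]
        exact (abs_sub _ _).trans (by linarith)
    rw [Real.norm_eq_abs, ← div_eq_mul_inv, le_div_iff₀ (by positivity)]
    linarith
  refine ⟨(∫ s, evenPart σ g s) / Real.pi, ?_, fun τ hτ => ?_⟩
  · rw [mul_div_cancel₀ _ Real.pi_ne_zero]
    have := intervalIntegral_tendsto_integral hint tendsto_neg_atTop_atBot tendsto_id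
    simpa only [id, intervalIntegral_evenPart σ _ B hgm hB] using this
  · have hK := integrable_poissonKer hτ
    have hgK := integrable_bounded_mul (measurable_evenPart σ hgm)
      (abs_evenPart_le (σ := σ) hB) hK
    rw [poisson_eq_evenPart σ hτ hm hA, poisson_eq_evenPart σ hτ hgm hB]
    have hae : ∀ᵐ s : ℝ, evenPart σ h s * poissonKer τ s =
        c 0 * poissonKer τ s + τ / Real.pi * evenPart σ g s
          - τ ^ 2 * (evenPart σ g s * poissonKer τ s) := by
      filter_upwards [compl_mem_ae_iff.2 (measure_singleton (0 : ℝ))] with s hs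
      rw [hrel s hs, poissonKer]
      have : 0 < s ^ 2 + τ ^ 2 := by positivity
      field_simp
      ring
    have hsum : Integrable fun s => c 0 * poissonKer τ s + τ / Real.pi * evenPart σ g s :=
      (hK.const_mul _).add (hint.const_mul _)
    rw [integral_congr_ae hae, integral_sub hsum
      (hgK.const_mul _), integral_add (hK.const_mul _) (hint.const_mul _), integral_const_mul,
      integral_const_mul, integral_const_mul, integral_poissonKer hτ]
    ring

/-- Fourth-order asymptotic expansion (2.9) of the Poisson integral: for smooth
compactly supported `f : ℝ → ℝ` and `σ ∈ ℝ`, the principal values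
`I_f^k(σ) = (1/π)·pv∫ S_σ^{2k} f` exist for `k = 1, 2`, and as `τ → 0⁺`,
`P_f(σ+iτ) = f(σ) + I_f^1(σ)τ − ½f''(σ)τ² − I_f^2(σ)τ³ + (1/24)f⁗(σ)τ⁴ + O(τ⁵)`. -/
theorem poisson_integral_expansion (f : ℝ → ℝ) (hf : ContDiff ℝ (⊤ : ℕ∞) f)
    (hsupp : HasCompactSupport f) (σ : ℝ) :
    ∃ I1 I2 : ℝ,
      Tendsto (fun R : ℝ => ∫ t in σ - R..σ + R, (backShift σ)^[2] f t) atTop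
        (𝓝 (Real.pi * I1)) ∧
      Tendsto (fun R : ℝ => ∫ t in σ - R..σ + R, (backShift σ)^[4] f t) atTop
        (𝓝 (Real.pi * I2)) ∧
      ∃ C δ : ℝ, 0 < C ∧ 0 < δ ∧ ∀ τ : ℝ, 0 < τ → τ < δ →
        |(∫ t : ℝ, f t * ((1 / Real.pi) * τ / ((σ - t) ^ 2 + τ ^ 2))) -
            (f σ + I1 * τ - (1 / 2) * deriv (deriv f) σ * τ ^ 2 - I2 * τ ^ 3 +
              (1 / 24) * iteratedDeriv 4 f σ * τ ^ 4)|
          ≤ C * τ ^ 5 := by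
  have H := hasExpansion_of_smooth σ hf hsupp
  set c : ℕ → ℝ := fun j => iteratedDeriv j f σ / (j.factorial : ℝ) with hc
  have hm0 : Measurable f := hf.continuous.measurable
  have hm2 : Measurable ((backShift σ)^[2] f) :=
    measurable_backShift σ (measurable_backShift σ hm0)
  have hm4 : Measurable ((backShift σ)^[4] f) :=
    measurable_backShift σ (measurable_backShift σ hm2)
  obtain ⟨I1, hI1, P1⟩ := poisson_step hm0 H
  obtain ⟨I2, hI2, P2⟩ := poisson_step hm2 (H.iterate_backShift 2)
  obtain ⟨I3, -, P3⟩ := poisson_step hm4 (H.iterate_backShift 4)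
  obtain ⟨C, hC⟩ := (H.iterate_backShift 6).bounded
  have hC0 : 0 ≤ C := (abs_nonneg _).trans (hC 0)
  simp only [← Function.iterate_add_apply, Nat.reduceAdd, zero_add] at hI2 P2 P3
  refine ⟨I1, I2, hI1, hI2, |I3| + C + 1, 1, by positivity, one_pos, fun τ hτ hτ1 => ?_⟩
  have c0 : c 0 = f σ := by simp [hc]
  have c2 : c 2 = deriv (deriv f) σ / 2 := by
    simp [hc, iteratedDeriv_succ, iteratedDeriv_zero]
  have c4 : c 4 = iteratedDeriv 4 f σ / 24 := by
    simp [hc, Nat.factorial]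
  have hP := abs_poisson_le σ hτ hC
  have e := P1 τ hτ
  rw [P2 τ hτ, P3 τ hτ, c0, c2, c4] at e
  set Q := ∫ t, (backShift σ)^[6] f t * poissonKer τ (σ - t)
  change |(∫ t, f t * poissonKer τ (σ - t)) - _| ≤ _
  rw [e]
  have e2 : f σ + I1 * τ - τ ^ 2 * (deriv (deriv f) σ / 2 + I2 * τ
      - τ ^ 2 * (iteratedDeriv 4 f σ / 24 + I3 * τ - τ ^ 2 * Q)) -
      (f σ + I1 * τ - (1 / 2) * deriv (deriv f) σ * τ ^ 2 - I2 * τ ^ 3 +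
        (1 / 24) * iteratedDeriv 4 f σ * τ ^ 4) = (I3 - τ * Q) * τ ^ 5 := by ring
  rw [e2, abs_mul, abs_of_pos (pow_pos hτ 5)]
  gcongr
  have h1 : |τ * Q| ≤ C := by
    rw [abs_mul, abs_of_pos hτ]
    exact (mul_le_of_le_one_left (abs_nonneg _) hτ1.le).trans hP
  exact (abs_sub _ _).trans (by linarith)
end

section
/- Let γ(t) = (2π)^{−1/2}·e^{−t²/2} be the Gaussian kernel, let T > 0, C > 0, and let I = [a,b] ⊆ ℝ be an interval with a < b. Suppose that for all x ∈ ℝ, (γ * 1_I)(2x) = (2π)^{−1/2}·∫_a^b e^{−(2x−t)²/2} dt ≤ C·e^{−2(|x|−T)²}. Then I ⊆ [−2T, 2T], i.e. a ≥ −2T and b ≤ 2T. -/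
open Real MeasureTheory

/-!
If `b > 2T`, some subinterval `[c, b]` of `[a, b]` with `c > 2T` has positive length. For `y ≥ b` the
integral of `exp (-(y - t)² / 2)` over `[a, b]` is then at least `(b - c) exp (-(y - c)² / 2)`, and
this exceeds every multiple of `exp (-(y - 2T)² / 2)` once `y = 2x` is large, since the quotient of
the two exponentials is `exp ((c - 2T)(2y - c - 2T) / 2)`. This is `right_end_le`; the bound on
the left endpoint is the same statement for the reflected interval `[-b, -a]`.
-/

/-- The bound on the right endpoint. Only nonnegative `x` are needed, and the normalising factor of
the Gaussian may be any `k > 0`. -/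
lemma right_end_le (T C a b k : ℝ) (hT : 0 < T) (hC : 0 < C) (hk : 0 < k) (hab : a < b)
    (hbound : ∀ x : ℝ, 0 ≤ x →
      k * ∫ t in a..b, Real.exp (-(2 * x - t) ^ 2 / 2) ≤ C * Real.exp (-2 * (x - T) ^ 2)) :
    b ≤ 2 * T := by
  by_contra! hb
  obtain ⟨c, hc, hcb⟩ : ∃ c, max a (2 * T) < c ∧ c < b := exists_between (max_lt hab hb)
  obtain ⟨hac, hTc⟩ := max_lt_iff.mp hc
  have hbc : 0 < b - c := sub_pos.mpr hcb
  have hd : 0 < c - 2 * T := sub_pos.mpr hTc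
  -- `y` is chosen so that the exponent `(c - 2T)(2y - c - 2T) / 2` is at least `C / (k (b - c))`.
  obtain ⟨M, hM⟩ : ∃ M, M = C / (k * (b - c)) / (c - 2 * T) := ⟨_, rfl⟩
  have hM0 : 0 < M := by rw [hM]; positivity
  have hdM : (c - 2 * T) * M = C / (k * (b - c)) := by rw [hM]; field_simp
  obtain ⟨y, hy⟩ : ∃ y, y = b + M := ⟨_, rfl⟩
  have hint (u v : ℝ) :
      IntervalIntegrable (fun t => Real.exp (-(y - t) ^ 2 / 2)) volume u v :=
    Continuous.intervalIntegrable (by fun_prop) u v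
  have hlow : (b - c) * Real.exp (-(y - c) ^ 2 / 2) ≤
      ∫ t in a..b, Real.exp (-(y - t) ^ 2 / 2) := by
    rw [← intervalIntegral.integral_add_adjacent_intervals (hint a c) (hint c b)]
    have h1 : 0 ≤ ∫ t in a..c, Real.exp (-(y - t) ^ 2 / 2) :=
      intervalIntegral.integral_nonneg hac.le fun t _ => (Real.exp_pos _).le
    have h2 : ∫ _ in c..b, Real.exp (-(y - c) ^ 2 / 2) ≤
        ∫ t in c..b, Real.exp (-(y - t) ^ 2 / 2) := by
      refine intervalIntegral.integral_mono_on hcb.le (by simp) (hint c b) fun t ht => ?_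
      apply Real.exp_le_exp.mpr
      nlinarith [ht.1, ht.2]
    rw [intervalIntegral.integral_const, smul_eq_mul] at h2
    linarith
  have hup := hbound (y / 2) (by linarith)
  rw [mul_div_cancel₀ y two_ne_zero] at hup
  have hmain : k * (b - c) * Real.exp (-(y - c) ^ 2 / 2) ≤
      C * Real.exp (-2 * (y / 2 - T) ^ 2) := by
    rw [mul_assoc]
    exact (mul_le_mul_of_nonneg_left hlow hk.le).trans hup
  obtain ⟨u, hu⟩ : ∃ u, u = (c - 2 * T) * (2 * y - c - 2 * T) / 2 := ⟨_, rfl⟩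
  have hsplit : Real.exp (-(y - c) ^ 2 / 2) =
      Real.exp u * Real.exp (-2 * (y / 2 - T) ^ 2) := by
    rw [← Real.exp_add]; congr 1; rw [hu]; ring
  rw [hsplit, ← mul_assoc] at hmain
  have hle := le_of_mul_le_mul_right hmain (Real.exp_pos _)
  have hu_ge : C / (k * (b - c)) ≤ u := by rw [← hdM, hu, hy]; nlinarith
  have hexp : C / (k * (b - c)) < Real.exp u := by linarith [Real.add_one_le_exp u]
  rw [div_lt_iff₀ (by positivity)] at hexp
  linarith

/-- If the Gaussian smoothing `γ * 1_{[a,b]}` of the indicator of an interval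
`[a,b]` (with `a < b`) satisfies `(γ * 1_{[a,b]})(2x) ≤ C e^{−2(|x|−T)²}` for
all real `x`, then `[a,b] ⊆ [−2T, 2T]`. -/
theorem interval_confined_by_decay (T C a b : ℝ) (hT : 0 < T) (hC : 0 < C)
    (hab : a < b)
    (hbound : ∀ x : ℝ,
      (2 * Real.pi) ^ (-(1:ℝ)/2) * ∫ t in a..b, Real.exp (-(2 * x - t) ^ 2 / 2)
        ≤ C * Real.exp (-2 * (|x| - T) ^ 2)) :
    -2 * T ≤ a ∧ b ≤ 2 * T := by
  have hk : 0 < (2 * Real.pi) ^ (-(1:ℝ)/2) := by positivity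
  constructor
  · have h := right_end_le T C (-b) (-a) _ hT hC hk (neg_lt_neg hab) fun x hx => by
      have h := hbound (-x)
      rw [abs_neg, abs_of_nonneg hx] at h
      rw [← intervalIntegral.integral_comp_neg]
      convert h using 6
      ring
    linarith
  · exact right_end_le T C a b _ hT hC hk hab fun x hx => by
      simpa only [abs_of_nonneg hx] using hbound x
end
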